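/- Suppose additionally that Λ_n ≠ 0 for every n ≥ 1 (i.e. M₀ = ∅). Then Problem 2 has exactly one solution, namely f(x) = Σ_{n≥1} (ψ_n/Λ_n) sin(nx); this series converges to a function of class C¹([0,π]) vanishing at 0 and π. Conversely, if M₀ ≠ ∅ then Problem 2 does not have a unique solution. -/

import Mathlib

open Real Set

noncomputable section

/-- Mean value of a function over the period `[0, 2π]`. -/
def pmean (g : ℝ → ℝ) : ℝ := (2 * π)⁻¹ * ∫ τ in (0:ℝ)..(2 * π), g τ

/-- `u` is a classical solution of `∂u/∂t = ∂²u/∂x² + F(x,t)` in `Π = (0,π)×(0,T)`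
vanishing on the parabolic boundary `Γ`. -/
def IsClassicalSolution (T : ℝ) (F : ℝ → ℝ → ℝ) (u : ℝ → ℝ → ℝ) : Prop :=
  ContinuousOn (fun p : ℝ × ℝ => u p.1 p.2) (Icc 0 π ×ˢ Icc 0 T) ∧
  (∀ x ∈ Icc (0:ℝ) π, u x 0 = 0) ∧
  (∀ t ∈ Icc (0:ℝ) T, u 0 t = 0 ∧ u π t = 0) ∧
  ∃ ut ux uxx : ℝ → ℝ → ℝ,
    ContinuousOn (fun p : ℝ × ℝ => ut p.1 p.2) (Ioo 0 π ×ˢ Ioo 0 T) ∧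
    ContinuousOn (fun p : ℝ × ℝ => uxx p.1 p.2) (Ioo 0 π ×ˢ Ioo 0 T) ∧
    ∀ x ∈ Ioo (0:ℝ) π, ∀ t ∈ Ioo (0:ℝ) T,
      HasDerivAt (fun t' => u x t') (ut x t) t ∧
      HasDerivAt (fun x' => u x' t) (ux x t) x ∧
      HasDerivAt (fun x' => ux x' t) (uxx x t) x ∧
      ut x t = uxx x t + F x t

/-- `f` is of class `C¹` on `[0,π]`. -/
def IsC1 (f : ℝ → ℝ) : Prop :=
  ∃ f' : ℝ → ℝ, ContinuousOn f' (Icc 0 π) ∧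
    ∀ x ∈ Icc (0:ℝ) π, HasDerivWithinAt f (f' x) (Icc 0 π) x

/-- `f` solves Problem 2: `f ∈ C¹([0,π])`, `f(0) = f(π) = 0`, and for any family of
classical solutions `u_ω` of the problem with source `f(x) r(t,ωt)` one has
`‖u_ω(·,t₀) − ψ‖_{C([0,π])} → 0` as `ω → ∞`. -/
def SolvesProblem2 (T t₀ : ℝ) (r0 : ℝ → ℝ) (r1 : ℝ → ℝ → ℝ) (ψ : ℝ → ℝ)
    (f : ℝ → ℝ) : Prop :=
  IsC1 f ∧ f 0 = 0 ∧ f π = 0 ∧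
  ∀ u : ℝ → ℝ → ℝ → ℝ,
    (∀ ω : ℝ, 1 ≤ ω →
      IsClassicalSolution T (fun x t => f x * (r0 t + r1 t (ω * t))) (u ω)) →
    ∀ ε > 0, ∃ ω₀ ≥ (1:ℝ), ∀ ω ≥ ω₀, ∀ x ∈ Icc (0:ℝ) π, |u ω x t₀ - ψ x| ≤ ε

/-!
The classical solution with source `f(x) r(t, ωt)` is obtained mode by mode: its `n`-th sine
coefficient at time `t` is `f_n ∫₀ᵗ exp (-n² (t - s)) r(s, ωs) ds`. As `ω → ∞` the zero-mean part
`r₁` averages out of each of these integrals, so `u_ω(·, t₀)` converges uniformly to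
`∑ f_n Λ_n sin (n x)`. Hence `f` solves Problem 2 if and only if `f_n Λ_n = ψ_n` for all `n`.
If no `Λ_n` vanishes, this determines `f`, and `n² Λ_n → r₀(t₀) ≠ 0` together with four
derivatives of `ψ` makes `∑ n |ψ_n / Λ_n|` converge, so that the resulting sine series is `C¹`.
If `Λ_m = 0`, the function `sin (m x)` can be added to any solution.
-/

open Filter Topology MeasureTheory

/-! ### Sine and cosine coefficients -/

/-- The `n`-th Fourier sine coefficient of `f` on `[0, π]`; the junk index `n = 0` gives `0`. -/
def sineCoeff (f : ℝ → ℝ) (n : ℕ) : ℝ := 2 / π * ∫ x in (0 : ℝ)..π, f x * sin (n * x)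

/-- The `n`-th Fourier cosine coefficient of `f` on `[0, π]`. -/
def cosineCoeff (f : ℝ → ℝ) (n : ℕ) : ℝ := 2 / π * ∫ x in (0 : ℝ)..π, f x * cos (n * x)

@[simp]
lemma sineCoeff_zero (f : ℝ → ℝ) : sineCoeff f 0 = 0 := by simp [sineCoeff]

lemma sineCoeff_congr {f g : ℝ → ℝ} (h : EqOn f g (Icc 0 π)) : sineCoeff f = sineCoeff g := by
  funext n
  rw [sineCoeff, sineCoeff, intervalIntegral.integral_congr fun x hx => ?_]
  rw [uIcc_of_le pi_pos.le] at hx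
  simp only [h hx]

lemma sineCoeff_add {f g : ℝ → ℝ} (hf : IntervalIntegrable f volume 0 π)
    (hg : IntervalIntegrable g volume 0 π) (n : ℕ) :
    sineCoeff (fun x => f x + g x) n = sineCoeff f n + sineCoeff g n := by
  simp only [sineCoeff, add_mul]
  rw [intervalIntegral.integral_add (hf.mul_continuousOn (by fun_prop))
    (hg.mul_continuousOn (by fun_prop)), mul_add]

lemma hasDerivAt_sin_mul (c x : ℝ) : HasDerivAt (fun x => sin (c * x)) (c * cos (c * x)) x :=
  ((hasDerivAt_id x).const_mul c).sin.congr_deriv (by simp only [id, mul_one, mul_comm])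

lemma hasDerivAt_cos_mul (c x : ℝ) : HasDerivAt (fun x => cos (c * x)) (-(c * sin (c * x))) x :=
  ((hasDerivAt_id x).const_mul c).cos.congr_deriv (by simp only [id, mul_one]; ring)

section IntegrationByParts

variable {h h' : ℝ → ℝ} (hd : ∀ x ∈ Icc 0 π, HasDerivWithinAt h (h' x) (Icc 0 π) x)
  (hi : IntervalIntegrable h' volume 0 π)

include hd hi

lemma integral_mul_deriv_zero_pi {v v' : ℝ → ℝ} (hv : ∀ x, HasDerivAt v (v' x) x)
    (hv' : Continuous v') :
    ∫ x in (0 : ℝ)..π, h x * v' x = h π * v π - h 0 * v 0 - ∫ x in (0 : ℝ)..π, h' x * v x := by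
  refine intervalIntegral.integral_mul_deriv_eq_deriv_mul_of_hasDerivWithinAt ?_
    (fun x _ => (hv x).hasDerivWithinAt) hi (hv'.intervalIntegrable _ _)
  rwa [uIcc_of_le pi_pos.le]

lemma natCast_mul_sineCoeff (h0 : h 0 = 0) (hπ : h π = 0) (n : ℕ) :
    n * sineCoeff h n = cosineCoeff h' n := by
  have key := integral_mul_deriv_zero_pi hd hi (fun x => hasDerivAt_cos_mul n x) (by fun_prop)
  simp only [h0, hπ, zero_mul, sub_zero, zero_sub, mul_neg, intervalIntegral.integral_neg,
    mul_left_comm (h _), intervalIntegral.integral_const_mul, neg_inj] at key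
  rw [sineCoeff, cosineCoeff, ← key, mul_left_comm]

lemma natCast_mul_cosineCoeff (n : ℕ) : n * cosineCoeff h n = -sineCoeff h' n := by
  have key := integral_mul_deriv_zero_pi hd hi (fun x => hasDerivAt_sin_mul n x) (by fun_prop)
  simp only [sin_nat_mul_pi, mul_zero, sin_zero, sub_zero, zero_sub, mul_left_comm (h _),
    intervalIntegral.integral_const_mul] at key
  rw [sineCoeff, cosineCoeff, mul_left_comm, key, mul_neg]

end IntegrationByParts

lemma sineCoeff_deriv_deriv {h h' h'' : ℝ → ℝ}
    (hd : ∀ x ∈ Icc 0 π, HasDerivWithinAt h (h' x) (Icc 0 π) x)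
    (hd' : ∀ x ∈ Icc 0 π, HasDerivWithinAt h' (h'' x) (Icc 0 π) x)
    (hi : IntervalIntegrable h'' volume 0 π) (h0 : h 0 = 0) (hπ : h π = 0) (n : ℕ) :
    sineCoeff h'' n = -(n ^ 2 * sineCoeff h n) := by
  have hi' : IntervalIntegrable h' volume 0 π :=
    ContinuousOn.intervalIntegrable_of_Icc pi_pos.le fun x hx => (hd' x hx).continuousWithinAt
  rw [eq_neg_iff_add_eq_zero, ← neg_eq_iff_add_eq_zero, ← natCast_mul_cosineCoeff hd' hi,
    ← natCast_mul_sineCoeff hd hi' h0 hπ]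
  ring

/-! ### Bessel's inequality -/

lemma neg_pi_lt_pi : -π < π := neg_lt_self pi_pos

lemma fourier_coe_eq_cos_add_sin (n : ℤ) (x : ℝ) :
    fourier n (x : AddCircle (π - -π)) = (cos (n * x) : ℂ) + sin (n * x) * Complex.I := by
  have hangle : 2 * (π : ℂ) * Complex.I * n * x / (π - -π : ℝ) = ((n * x : ℝ) : ℂ) * Complex.I := by
    have := Complex.ofReal_ne_zero.2 pi_ne_zero
    push_cast
    field_simp
    ring
  rw [fourier_coe_apply, hangle, Complex.exp_mul_I]
  push_cast
  rfl

lemma fourierCoeffOn_ofReal_eq {g : ℝ → ℝ} (hg : IntervalIntegrable g volume (-π) π) (n : ℤ) :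
    fourierCoeffOn neg_pi_lt_pi (fun x => (g x : ℂ)) n = (2 * π)⁻¹ *
      ((∫ x in (-π)..π, g x * cos (n * x) : ℝ) -
        (∫ x in (-π)..π, g x * sin (n * x) : ℝ) * Complex.I) := by
  have hint {v : ℝ → ℝ} (hv : Continuous v) :
      IntervalIntegrable (fun x => ((g x * v x : ℝ) : ℂ)) volume (-π) π :=
    let hgv := hg.mul_continuousOn hv.continuousOn
    ⟨hgv.1.ofReal, hgv.2.ofReal⟩
  have hexp (x : ℝ) : fourier (-n) (x : AddCircle (π - -π)) • (g x : ℂ) =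
      (g x * cos (n * x) : ℝ) - (g x * sin (n * x) : ℝ) * Complex.I := by
    rw [fourier_coe_eq_cos_add_sin, Int.cast_neg, neg_mul, cos_neg, sin_neg, smul_eq_mul]
    push_cast
    ring
  rw [fourierCoeffOn_eq_integral]
  simp only [hexp]
  rw [intervalIntegral.integral_sub (hint (by fun_prop)) ((hint (by fun_prop)).mul_const _),
    intervalIntegral.integral_mul_const, intervalIntegral.integral_ofReal,
    intervalIntegral.integral_ofReal, Complex.real_smul, sub_neg_eq_add, ← two_mul]
  push_cast
  rw [one_div]

lemma integral_indicator_Ioc_zero_pi (h v : ℝ → ℝ) :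
    ∫ x in (-π)..π, (Ioc 0 π).indicator h x * v x = ∫ x in (0 : ℝ)..π, h x * v x := by
  rw [intervalIntegral.integral_of_le neg_pi_lt_pi.le, intervalIntegral.integral_of_le pi_pos.le,
    ← integral_indicator measurableSet_Ioc, ← integral_indicator measurableSet_Ioc]
  congr 1 with x
  by_cases hx : x ∈ Ioc 0 π
  · simp [hx, Ioc_subset_Ioc_left (neg_nonpos.2 pi_pos.le) hx]
  · simp [hx]

lemma norm_sq_fourierCoeffOn_indicator {h : ℝ → ℝ} (hh : IntervalIntegrable h volume 0 π)
    (n : ℕ) :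
    ‖fourierCoeffOn neg_pi_lt_pi (fun x => (((Ioc 0 π).indicator h x : ℝ) : ℂ)) (n : ℤ)‖ ^ 2 =
      (cosineCoeff h n ^ 2 + sineCoeff h n ^ 2) / 16 := by
  have hint : IntervalIntegrable ((Ioc 0 π).indicator h) volume (-π) π := by
    rw [intervalIntegrable_iff_integrableOn_Ioc_of_le pi_pos.le,
      ← integrable_indicator_iff measurableSet_Ioc] at hh
    exact hh.intervalIntegrable
  have heq : fourierCoeffOn neg_pi_lt_pi (fun x => (((Ioc 0 π).indicator h x : ℝ) : ℂ)) (n : ℤ) =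
      ((cosineCoeff h n / 4 : ℝ) : ℂ) + ((-sineCoeff h n / 4 : ℝ) : ℂ) * Complex.I := by
    have := Complex.ofReal_ne_zero.2 pi_ne_zero
    rw [fourierCoeffOn_ofReal_eq hint]
    simp only [integral_indicator_Ioc_zero_pi, cosineCoeff, sineCoeff, Int.cast_natCast]
    push_cast
    field_simp
    ring
  rw [heq, ← Complex.normSq_eq_norm_sq, Complex.normSq_add_mul_I]
  ring

lemma summable_sq_cosineCoeff_add_sq_sineCoeff {h : ℝ → ℝ}
    (hh : MemLp h 2 (volume.restrict (Ioc 0 π))) :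
    Summable fun n => cosineCoeff h n ^ 2 + sineCoeff h n ^ 2 := by
  have hint : IntervalIntegrable h volume 0 π :=
    (intervalIntegrable_iff_integrableOn_Ioc_of_le pi_pos.le).2 (hh.integrable one_le_two)
  have hind : MemLp (fun x => (((Ioc 0 π).indicator h x : ℝ) : ℂ)) 2
      (volume.restrict (Ioc (-π) π)) :=
    ((memLp_indicator_iff_restrict measurableSet_Ioc).2 hh).ofReal.restrict _
  have hbessel := (hasSum_sq_fourierCoeffOn neg_pi_lt_pi hind).summable.comp_injective
    Nat.cast_injective
  refine (hbessel.mul_left 16).congr fun n => ?_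
  simp only [Function.comp_apply, norm_sq_fourierCoeffOn_indicator hint]
  ring

lemma memLp_two_of_continuousOn_Icc {h : ℝ → ℝ} {a b : ℝ} (hh : ContinuousOn h (Icc a b)) :
    MemLp h 2 (volume.restrict (Ioc a b)) := by
  obtain ⟨C, hC⟩ := isCompact_Icc.exists_bound_of_continuousOn hh
  refine MemLp.of_bound ((hh.mono Ioc_subset_Icc_self).aestronglyMeasurable measurableSet_Ioc) C ?_
  filter_upwards [ae_restrict_mem measurableSet_Ioc] with x hx using hC x (Ioc_subset_Icc_self hx)

lemma summable_sq_cosineCoeff {h : ℝ → ℝ} (hh : MemLp h 2 (volume.restrict (Ioc 0 π))) :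
    Summable fun n => cosineCoeff h n ^ 2 :=
  (summable_sq_cosineCoeff_add_sq_sineCoeff hh).of_nonneg_of_le (fun _ => sq_nonneg _)
    fun _ => le_add_of_nonneg_right (sq_nonneg _)

lemma summable_sq_sineCoeff {h : ℝ → ℝ} (hh : MemLp h 2 (volume.restrict (Ioc 0 π))) :
    Summable fun n => sineCoeff h n ^ 2 :=
  (summable_sq_cosineCoeff_add_sq_sineCoeff hh).of_nonneg_of_le (fun _ => sq_nonneg _)
    fun _ => le_add_of_nonneg_left (sq_nonneg _)

lemma summable_abs_div_natCast {c : ℕ → ℝ} (hc : Summable fun n => c n ^ 2) :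
    Summable fun n : ℕ => |c n| / n := by
  refine (hc.add (summable_one_div_nat_pow.2 one_lt_two)).of_nonneg_of_le
    (fun n => by positivity) fun n => ?_
  have hAMGM := two_mul_le_add_sq |c n| (1 / (n : ℝ))
  rw [sq_abs, one_div_pow] at hAMGM
  have hpos : 0 ≤ |c n| * (1 / (n : ℝ)) := by positivity
  rw [div_eq_mul_one_div]
  linarith

lemma IsC1.continuousOn {f : ℝ → ℝ} (hf : IsC1 f) : ContinuousOn f (Icc 0 π) :=
  let ⟨_, _, hd⟩ := hf
  fun x hx => (hd x hx).continuousWithinAt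

lemma IsC1.intervalIntegrable {f : ℝ → ℝ} (hf : IsC1 f) : IntervalIntegrable f volume 0 π :=
  hf.continuousOn.intervalIntegrable_of_Icc pi_pos.le

lemma IsC1.summable_abs_sineCoeff {f : ℝ → ℝ} (hf : IsC1 f) (h0 : f 0 = 0) (hπ : f π = 0) :
    Summable fun n => |sineCoeff f n| := by
  obtain ⟨f', hf', hd⟩ := hf
  refine (summable_abs_div_natCast (summable_sq_cosineCoeff
    (memLp_two_of_continuousOn_Icc hf'))).congr fun n => ?_
  rw [← natCast_mul_sineCoeff hd (hf'.intervalIntegrable_of_Icc pi_pos.le) h0 hπ, abs_mul,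
    Nat.abs_cast]
  rcases eq_or_ne n 0 with rfl | hn
  · simp
  · field_simp

/-! ### Sine and cosine series -/

/-- The sine series with coefficients `a`. It is indexed from `0`, so that the index of a term is
its frequency; the term of index `0` vanishes. -/
def sineSeries (a : ℕ → ℝ) (x : ℝ) : ℝ := ∑' n, a n * sin (n * x)

/-- The cosine series with coefficients `a`, the derivative of a sine series. -/
def cosineSeries (a : ℕ → ℝ) (x : ℝ) : ℝ := ∑' n, a n * cos (n * x)

lemma norm_mul_sin_le (a y : ℝ) : ‖a * sin y‖ ≤ |a| := by
  rw [norm_mul]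
  exact mul_le_of_le_one_right (abs_nonneg _) (abs_sin_le_one y)

lemma norm_mul_cos_le (a y : ℝ) : ‖a * cos y‖ ≤ |a| := by
  rw [norm_mul]
  exact mul_le_of_le_one_right (abs_nonneg _) (abs_cos_le_one y)

@[simp]
lemma sineSeries_zero_right (a : ℕ → ℝ) : sineSeries a 0 = 0 := by simp [sineSeries]

@[simp]
lemma sineSeries_pi (a : ℕ → ℝ) : sineSeries a π = 0 := by simp [sineSeries, sin_nat_mul_pi]

lemma sineSeries_eq_tsum_succ (a : ℕ → ℝ) (x : ℝ) :
    sineSeries a x = ∑' n : ℕ, a (n + 1) * sin (((n : ℝ) + 1) * x) := by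
  have hsupp : Function.support (fun n : ℕ => a n * sin (n * x)) ⊆ range Nat.succ := by
    intro n hn
    rw [Nat.range_succ, mem_ofPred_eq, Nat.pos_iff_ne_zero]
    rintro rfl
    simp at hn
  rw [sineSeries, ← Nat.succ_injective.tsum_eq hsupp]
  simp only [Nat.succ_eq_add_one, Nat.cast_add, Nat.cast_one]

section AbsolutelySummable

variable {a b : ℕ → ℝ} (ha : Summable fun n => |a n|) (hb : Summable fun n => |b n|)

include ha

lemma summable_mul_sin (x : ℝ) : Summable fun n : ℕ => a n * sin (n * x) :=
  ha.of_norm_bounded fun _ => norm_mul_sin_le _ _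

lemma summable_mul_sin_succ (x : ℝ) :
    Summable fun n : ℕ => a (n + 1) * sin (((n : ℝ) + 1) * x) := by
  simpa only [Nat.cast_add, Nat.cast_one] using (summable_nat_add_iff 1).2 (summable_mul_sin ha x)

lemma continuous_sineSeries : Continuous (sineSeries a) :=
  continuous_tsum (fun _ => by fun_prop) ha fun _ _ => norm_mul_sin_le _ _

lemma continuous_cosineSeries : Continuous (cosineSeries a) :=
  continuous_tsum (fun _ => by fun_prop) ha fun _ _ => norm_mul_cos_le _ _

include hb in
lemma sineSeries_add (x : ℝ) :
    sineSeries (fun n => a n + b n) x = sineSeries a x + sineSeries b x := by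
  simp only [sineSeries, add_mul]
  exact (summable_mul_sin ha x).tsum_add (summable_mul_sin hb x)

lemma abs_sineSeries_le (x : ℝ) : |sineSeries a x| ≤ ∑' n, |a n| :=
  tsum_of_norm_bounded ha.hasSum fun _ => norm_mul_sin_le _ _

end AbsolutelySummable

section Differentiation

variable {a : ℕ → ℝ} (ha : Summable fun n : ℕ => |n * a n|)

include ha

lemma summable_abs_of_summable_abs_natCast_mul : Summable fun n => |a n| := by
  rw [← summable_nat_add_iff 1] at ha ⊢
  refine ha.of_nonneg_of_le (fun _ => abs_nonneg _) fun n => ?_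
  rw [abs_mul, Nat.abs_cast]
  exact le_mul_of_one_le_left (abs_nonneg _) (by simp)

lemma hasDerivAt_sineSeries (x : ℝ) :
    HasDerivAt (sineSeries a) (cosineSeries (fun n => n * a n) x) x :=
  hasDerivAt_tsum ha
    (fun n y => ((hasDerivAt_sin_mul n y).const_mul (a n)).congr_deriv (by ring))
    (fun _ _ => norm_mul_cos_le _ _) (y₀ := 0) (by simp) x

lemma hasDerivAt_cosineSeries (x : ℝ) :
    HasDerivAt (cosineSeries a) (-sineSeries (fun n => n * a n) x) x := by
  rw [sineSeries, ← tsum_neg]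
  exact hasDerivAt_tsum (g' := fun n y => -(n * a n * sin (n * y))) ha
    (fun n y => ((hasDerivAt_cos_mul n y).const_mul (a n)).congr_deriv (by ring))
    (fun _ _ => by rw [norm_neg]; exact norm_mul_sin_le _ _) (y₀ := 0)
    (by simpa using (summable_abs_of_summable_abs_natCast_mul ha).of_abs) x

lemma isC1_sineSeries : IsC1 (sineSeries a) :=
  ⟨cosineSeries fun n => n * a n, (continuous_cosineSeries ha).continuousOn,
    fun x _ => (hasDerivAt_sineSeries ha x).hasDerivWithinAt⟩

end Differentiation

/-! ### Coefficients of a sine series -/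

lemma integral_cos_int_mul (k : ℤ) :
    ∫ x in (0 : ℝ)..π, cos (k * x) = if k = 0 then π else 0 := by
  split_ifs with hk
  · simp [hk]
  · rw [intervalIntegral.integral_comp_mul_left cos (Int.cast_ne_zero.2 hk), integral_cos]
    simp [sin_int_mul_pi]

lemma integral_sin_mul_sin (n : ℕ) {m : ℕ} (hm : m ≠ 0) :
    ∫ x in (0 : ℝ)..π, sin (n * x) * sin (m * x) = if n = m then π / 2 else 0 := by
  have hprod (x : ℝ) : sin (n * x) * sin (m * x) =
      (cos (((n - m : ℤ) : ℝ) * x) - cos (((n + m : ℤ) : ℝ) * x)) / 2 := by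
    push_cast
    rw [sub_mul, add_mul, cos_sub, cos_add]
    ring
  have hne : (n + m : ℤ) ≠ 0 := by lia
  simp only [hprod]
  rw [intervalIntegral.integral_div, intervalIntegral.integral_sub
    (Continuous.intervalIntegrable (by fun_prop) _ _)
    (Continuous.intervalIntegrable (by fun_prop) _ _), integral_cos_int_mul, integral_cos_int_mul,
    if_neg hne, sub_zero]
  simp only [sub_eq_zero, Nat.cast_inj, ite_div, zero_div]

lemma sineCoeff_sin {n m : ℕ} (hm : m ≠ 0) :
    sineCoeff (fun x => sin (n * x)) m = if n = m then 1 else 0 := by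
  have := pi_ne_zero
  rw [sineCoeff, integral_sin_mul_sin n hm]
  split_ifs
  · field_simp
  · rw [mul_zero]

lemma sineCoeff_sineSeries {a : ℕ → ℝ} (ha : Summable fun n => |a n|) {m : ℕ} (hm : m ≠ 0) :
    sineCoeff (sineSeries a) m = a m := by
  have hsum := intervalIntegral.hasSum_integral_of_dominated_convergence (a := 0) (b := π)
    (μ := volume) (F := fun n x => a n * sin (n * x) * sin (m * x))
    (f := fun x => sineSeries a x * sin (m * x)) (fun n _ => |a n|)
    (fun n => Continuous.aestronglyMeasurable (by fun_prop))
    (fun n => .of_forall fun x _ => by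
      exact (norm_mul_sin_le _ _).trans (norm_mul_sin_le _ _))
    (.of_forall fun _ _ => ha) intervalIntegrable_const
    (.of_forall fun x _ => (summable_mul_sin ha x).hasSum.mul_right _)
  simp only [mul_assoc, intervalIntegral.integral_const_mul] at hsum
  rw [sineCoeff, ← hsum.tsum_eq, ← tsum_mul_left, tsum_eq_single m]
  · rw [mul_left_comm, ← sineCoeff, sineCoeff_sin hm, if_pos rfl, mul_one]
  · intro n hn
    rw [mul_left_comm, ← sineCoeff, sineCoeff_sin hm, if_neg hn, mul_zero]

/-! ### Sine expansion of a continuous function -/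

/-- The odd extension to `[-π, π]` of a function on `[0, π]` that vanishes at `0`. -/
def oddExtension (f : ℝ → ℝ) (x : ℝ) : ℝ := f (max x 0) - f (max (-x) 0)

lemma oddExtension_neg (f : ℝ → ℝ) (x : ℝ) : oddExtension f (-x) = -oddExtension f x := by
  simp [oddExtension]

lemma oddExtension_of_nonneg {f : ℝ → ℝ} (h0 : f 0 = 0) {x : ℝ} (hx : 0 ≤ x) :
    oddExtension f x = f x := by
  simp [oddExtension, hx, h0]

lemma continuousOn_oddExtension {f : ℝ → ℝ} (hf : ContinuousOn f (Icc 0 π)) :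
    ContinuousOn (oddExtension f) (Icc (-π) π) := by
  refine (hf.comp (by fun_prop) ?_).sub (hf.comp (by fun_prop) ?_) <;>
  · rintro x ⟨hx, hx'⟩
    exact ⟨le_max_right _ _, max_le (by linarith) pi_pos.le⟩

lemma integral_eq_zero_of_odd {g : ℝ → ℝ} (hg : ∀ x, g (-x) = -g x) (c : ℝ) :
    ∫ x in (-c)..c, g x = 0 := by
  have hneg := intervalIntegral.integral_comp_neg (a := -c) (b := c) g
  simp only [hg, neg_neg, intervalIntegral.integral_neg] at hneg
  linarith

lemma integral_eq_two_mul_of_even {g : ℝ → ℝ} (hg : ∀ x, g (-x) = g x) {c : ℝ}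
    (hi : IntervalIntegrable g volume 0 c) :
    ∫ x in (-c)..c, g x = 2 * ∫ x in (0 : ℝ)..c, g x := by
  have hneg : ∫ x in (-c)..0, g x = ∫ x in (0 : ℝ)..c, g x := by
    simpa [hg] using (intervalIntegral.integral_comp_neg (a := 0) (b := c) g).symm
  have hi' : IntervalIntegrable g volume (-c) 0 := by
    simpa [hg] using ((IntervalIntegrable.iff_comp_neg (by simp)).1 hi).symm
  rw [← intervalIntegral.integral_add_adjacent_intervals hi' hi, hneg, two_mul]

section SineExpansion

variable {f : ℝ → ℝ} (hf : ContinuousOn f (Icc 0 π)) (h0 : f 0 = 0)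

include hf h0

lemma fourierCoeffOn_oddExtension (n : ℤ) :
    fourierCoeffOn neg_pi_lt_pi (fun x => (oddExtension f x : ℂ)) n =
      -((π⁻¹ * ∫ x in (0 : ℝ)..π, f x * sin (n * x) : ℝ) * Complex.I) := by
  have hodd := continuousOn_oddExtension hf
  have hcos : ∫ x in (-π)..π, oddExtension f x * cos (n * x) = 0 :=
    integral_eq_zero_of_odd (fun x => by rw [oddExtension_neg, mul_neg, cos_neg, neg_mul]) π
  have hsin : ∫ x in (-π)..π, oddExtension f x * sin (n * x) =
      2 * ∫ x in (0 : ℝ)..π, f x * sin (n * x) := by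
    have hcont : ContinuousOn (fun x => oddExtension f x * sin (n * x)) (Icc 0 π) :=
      (hodd.mono (Icc_subset_Icc_left (neg_nonpos.2 pi_pos.le))).mul (by fun_prop)
    rw [integral_eq_two_mul_of_even
      (fun x => by rw [oddExtension_neg, mul_neg, sin_neg, neg_mul_neg])
      (hcont.intervalIntegrable_of_Icc pi_pos.le)]
    congr 1
    refine intervalIntegral.integral_congr fun x hx => ?_
    rw [uIcc_of_le pi_pos.le] at hx
    simp only [oddExtension_of_nonneg h0 hx.1]
  rw [fourierCoeffOn_ofReal_eq (hodd.intervalIntegrable_of_Icc neg_pi_lt_pi.le), hcos, hsin]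
  push_cast
  ring

lemma fourierCoeffOn_oddExtension_natCast (n : ℕ) :
    fourierCoeffOn neg_pi_lt_pi (fun x => (oddExtension f x : ℂ)) n =
      -((sineCoeff f n / 2 : ℝ) * Complex.I) := by
  rw [fourierCoeffOn_oddExtension hf h0, sineCoeff, Int.cast_natCast]
  push_cast
  ring

lemma fourierCoeffOn_oddExtension_neg_natCast (n : ℕ) :
    fourierCoeffOn neg_pi_lt_pi (fun x => (oddExtension f x : ℂ)) (-n) =
      (sineCoeff f n / 2 : ℝ) * Complex.I := by
  rw [fourierCoeffOn_oddExtension hf h0, sineCoeff]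
  simp only [Int.cast_neg, Int.cast_natCast, neg_mul, sin_neg, mul_neg,
    intervalIntegral.integral_neg]
  push_cast
  ring

lemma hasSum_fourier_oddExtension (hπ : f π = 0) (hs : Summable fun n => |sineCoeff f n|) {x : ℝ}
    (hx : x ∈ Ioc (-π) π) :
    HasSum (fun i : ℤ => fourierCoeffOn neg_pi_lt_pi (fun y => (oddExtension f y : ℂ)) i *
      fourier i (x : AddCircle (π - -π))) (oddExtension f x) := by
  have : Fact (0 < π - -π) := ⟨sub_pos.2 neg_pi_lt_pi⟩
  have hb : -π + (π - -π) = π := add_sub_cancel _ _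
  have hcont : Continuous
      (AddCircle.liftIoc (π - -π) (-π) fun y => (oddExtension f y : ℂ)) := by
    refine AddCircle.liftIoc_continuous ?_ ?_
    · rw [hb, oddExtension_neg, oddExtension_of_nonneg h0 pi_pos.le, hπ, neg_zero]
    · rw [hb]
      exact Complex.continuous_ofReal.comp_continuousOn (continuousOn_oddExtension hf)
  have hsum : Summable (fourierCoeffOn neg_pi_lt_pi fun y => (oddExtension f y : ℂ)) := by
    refine .of_nat_of_neg (.of_norm ?_) (.of_norm ?_) <;>
    · simp only [fourierCoeffOn_oddExtension_natCast hf h0,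
        fourierCoeffOn_oddExtension_neg_natCast hf h0, norm_neg, norm_mul, Complex.norm_real,
        Complex.norm_I, mul_one, norm_div]
      exact hs.div_const _
  have key := has_pointwise_sum_fourier_series_of_summable (f := ⟨_, hcont⟩) hsum x
  rwa [ContinuousMap.coe_mk, AddCircle.liftIoc_coe_apply (by rwa [hb])] at key

lemma sineSeries_sineCoeff (hπ : f π = 0) (hs : Summable fun n => |sineCoeff f n|) :
    EqOn (sineSeries (sineCoeff f)) f (Icc 0 π) := by
  intro x hx
  have key := (hasSum_fourier_oddExtension hf h0 hπ hs
    ⟨(neg_neg_of_pos pi_pos).trans_le hx.1, hx.2⟩).nat_add_neg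
  have hzero : fourierCoeffOn neg_pi_lt_pi (fun y => (oddExtension f y : ℂ)) 0 = 0 := by
    simpa using fourierCoeffOn_oddExtension_natCast hf h0 0
  have hterm (n : ℕ) : -((sineCoeff f n / 2 : ℝ) * Complex.I) *
        fourier n (x : AddCircle (π - -π)) +
      (sineCoeff f n / 2 : ℝ) * Complex.I * fourier (-n : ℤ) (x : AddCircle (π - -π)) =
      (sineCoeff f n * sin (n * x) : ℝ) := by
    rw [fourier_coe_eq_cos_add_sin, fourier_coe_eq_cos_add_sin]
    simp only [Int.cast_neg, Int.cast_natCast, neg_mul, sin_neg, cos_neg]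
    push_cast
    linear_combination (-(sineCoeff f n : ℂ) * Complex.sin (n * x)) * Complex.I_mul_I
  simp only [fourierCoeffOn_oddExtension_natCast hf h0,
    fourierCoeffOn_oddExtension_neg_natCast hf h0, hterm, hzero, zero_mul, add_zero,
    oddExtension_of_nonneg h0 hx.1, Complex.hasSum_ofReal] at key
  exact key.tsum_eq

end SineExpansion

lemma IsC1.sineSeries_sineCoeff {f : ℝ → ℝ} (hf : IsC1 f) (h0 : f 0 = 0) (hπ : f π = 0) :
    EqOn (sineSeries (sineCoeff f)) f (Icc 0 π) :=
  _root_.sineSeries_sineCoeff hf.continuousOn h0 hπ (hf.summable_abs_sineCoeff h0 hπ)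

/-! ### Duhamel's integral for a single mode -/

/-- The value at time `t` of the solution of `q' = -k q + ρ`, `q 0 = 0`. For `k = n ^ 2` and
`ρ = r₀`, `t = t₀` this is the number `Λ_n` of the problem. -/
def duhamel (k : ℝ) (ρ : ℝ → ℝ) (t : ℝ) : ℝ := ∫ s in (0 : ℝ)..t, exp (-k * (t - s)) * ρ s

@[simp]
lemma duhamel_zero_right (k : ℝ) (ρ : ℝ → ℝ) : duhamel k ρ 0 = 0 := by simp [duhamel]

lemma duhamel_eq_exp_mul (k : ℝ) (ρ : ℝ → ℝ) (t : ℝ) :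
    duhamel k ρ t = exp (-k * t) * ∫ s in (0 : ℝ)..t, exp (k * s) * ρ s := by
  rw [duhamel, ← intervalIntegral.integral_const_mul]
  congr 1 with s
  rw [← mul_assoc, ← exp_add]
  ring_nf

lemma duhamel_add (k : ℝ) {ρ σ : ℝ → ℝ} {t : ℝ} (hρ : IntervalIntegrable ρ volume 0 t)
    (hσ : IntervalIntegrable σ volume 0 t) :
    duhamel k (fun s => ρ s + σ s) t = duhamel k ρ t + duhamel k σ t := by
  simp only [duhamel, mul_add]
  exact intervalIntegral.integral_add (hρ.continuousOn_mul (by fun_prop))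
    (hσ.continuousOn_mul (by fun_prop))

section Regularity

variable {T : ℝ} {ρ : ℝ → ℝ} (hρ : ContinuousOn ρ (Icc 0 T)) (k : ℝ)

include hρ

lemma continuousOn_duhamel : ContinuousOn (duhamel k ρ) (Icc 0 T) := by
  rcases lt_or_ge T 0 with hT | hT
  · simp [Icc_eq_empty_of_lt hT]
  have hprim : ContinuousOn (fun t => ∫ s in (0 : ℝ)..t, exp (k * s) * ρ s) (Icc 0 T) := by
    rw [← uIcc_of_le hT] at hρ ⊢
    exact intervalIntegral.continuousOn_primitive_interval
      (ContinuousOn.integrableOn_compact isCompact_uIcc (by fun_prop))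
  exact (ContinuousOn.mul (by fun_prop) hprim).congr fun t _ => duhamel_eq_exp_mul k ρ t

lemma hasDerivAt_duhamel {t : ℝ} (ht : t ∈ Ioo 0 T) :
    HasDerivAt (duhamel k ρ) (ρ t - k * duhamel k ρ t) t := by
  have hcont : ContinuousOn (fun s => exp (k * s) * ρ s) (Icc 0 T) := by fun_prop
  have hprim : HasDerivAt (fun t => ∫ s in (0 : ℝ)..t, exp (k * s) * ρ s) (exp (k * t) * ρ t) t :=
    intervalIntegral.integral_hasDerivAt_right
      ((hcont.mono (Icc_subset_Icc_right ht.2.le)).intervalIntegrable_of_Icc ht.1.le)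
      ((hcont.mono Ioo_subset_Icc_self).stronglyMeasurableAtFilter isOpen_Ioo t ht)
      (hcont.continuousAt (Icc_mem_nhds ht.1 ht.2))
  have hexp : HasDerivAt (fun t => exp (-k * t)) (-k * exp (-k * t)) t :=
    ((hasDerivAt_id t).const_mul (-k)).exp.congr_deriv (by simp only [id]; ring)
  have hmul : exp (-k * t) * exp (k * t) = 1 := by rw [← exp_add]; simp
  rw [funext (duhamel_eq_exp_mul k ρ)]
  refine (hexp.mul hprim).congr_deriv ?_
  linear_combination ρ t * hmul

end Regularity

lemma integral_mul_exp_neg_mul_sub (k t : ℝ) :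
    ∫ s in (0 : ℝ)..t, k * exp (-k * (t - s)) = 1 - exp (-k * t) := by
  have hderiv (s : ℝ) :
      HasDerivAt (fun s => exp (-k * (t - s))) (k * exp (-k * (t - s))) s :=
    (((hasDerivAt_id s).const_sub t).const_mul (-k)).exp.congr_deriv (by simp only [id]; ring)
  rw [intervalIntegral.integral_eq_sub_of_hasDerivAt (fun s _ => hderiv s)
    (Continuous.intervalIntegrable (by fun_prop) _ _)]
  simp

section Bounds

variable {k t M : ℝ} {ρ : ℝ → ℝ} (hk : 0 ≤ k) (ht : 0 ≤ t) (hM : ∀ s ∈ Icc 0 t, |ρ s| ≤ M)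

include hk ht hM

lemma abs_duhamel_le : |duhamel k ρ t| ≤ M * t := by
  have hbound : ∀ s ∈ uIoc 0 t, ‖exp (-k * (t - s)) * ρ s‖ ≤ M := by
    intro s hs
    rw [uIoc_of_le ht] at hs
    rw [norm_mul, norm_of_nonneg (exp_pos _).le]
    refine (mul_le_of_le_one_left (norm_nonneg _) (exp_le_one_iff.2 ?_)).trans
      (hM s (Ioc_subset_Icc_self hs))
    nlinarith [hs.2]
  have hnorm := intervalIntegral.norm_integral_le_of_norm_le_const hbound
  rwa [sub_zero, abs_of_nonneg ht] at hnorm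

lemma mul_abs_duhamel_le : k * |duhamel k ρ t| ≤ M := by
  have hM0 : 0 ≤ M := (abs_nonneg _).trans (hM 0 ⟨le_rfl, ht⟩)
  have hbound : |duhamel k ρ t| ≤ ∫ s in (0 : ℝ)..t, exp (-k * (t - s)) * M := by
    rw [duhamel, ← norm_eq_abs]
    refine intervalIntegral.norm_integral_le_of_norm_le ht (.of_forall fun s hs => ?_)
      (Continuous.intervalIntegrable (by fun_prop) _ _)
    rw [norm_mul, norm_of_nonneg (exp_pos _).le]
    gcongr
    exact hM s (Ioc_subset_Icc_self hs)
  calc k * |duhamel k ρ t| ≤ k * ∫ s in (0 : ℝ)..t, exp (-k * (t - s)) * M := by gcongr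
    _ = (1 - exp (-k * t)) * M := by
      rw [← integral_mul_exp_neg_mul_sub, intervalIntegral.integral_mul_const, ← mul_assoc,
        intervalIntegral.integral_const_mul]
    _ ≤ M := mul_le_of_le_one_left hM0 (by linarith [exp_pos (-k * t)])

end Bounds

lemma tendstoUniformlyOn_mul_exp_neg_mul_sub {t δ : ℝ} (hδ : 0 < δ) :
    TendstoUniformlyOn (fun k s => k * exp (-k * (t - s))) 0 atTop (Iic (t - δ)) := by
  have hlim : Tendsto (fun k : ℝ => k * exp (-δ * k)) atTop (𝓝 0) := by
    simpa using tendsto_rpow_mul_exp_neg_mul_atTop_nhds_zero 1 δ hδ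
  rw [Metric.tendstoUniformlyOn_iff]
  intro ε hε
  filter_upwards [hlim.eventually_lt_const hε, eventually_ge_atTop 0] with k hkε hk s hs
  rw [Pi.zero_apply, dist_zero_left, norm_of_nonneg (by positivity)]
  refine (mul_le_mul_of_nonneg_left (exp_le_exp.2 ?_) hk).trans_lt hkε
  nlinarith [mem_Iic.1 hs]

lemma tendsto_mul_duhamel {t : ℝ} {ρ : ℝ → ℝ} (ht : 0 < t) (hρ : IntegrableOn ρ (Ioc 0 t))
    (hc : ContinuousWithinAt ρ (Ioc 0 t) t) :
    Tendsto (fun k => k * duhamel k ρ t) atTop (𝓝 (ρ t)) := by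
  have hmass : Tendsto (fun k => ∫ s in Ioc 0 t, k * exp (-k * (t - s))) atTop (𝓝 1) := by
    simp only [← intervalIntegral.integral_of_le ht.le, integral_mul_exp_neg_mul_sub]
    have hexp : Tendsto (fun k => exp (-k * t)) atTop (𝓝 0) :=
      tendsto_exp_atBot.comp (tendsto_neg_atTop_atBot.atBot_mul_const ht)
    simpa using hexp.const_sub 1
  have huniform (u : Set ℝ) (hu : IsOpen u) (htu : t ∈ u) :
      TendstoUniformlyOn (fun k s => k * exp (-k * (t - s))) 0 atTop (Ioc 0 t \ u) := by
    obtain ⟨δ, hδ, hball⟩ := Metric.isOpen_iff.1 hu t htu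
    refine (tendstoUniformlyOn_mul_exp_neg_mul_sub hδ).mono fun s hs => ?_
    by_contra hlt
    rw [mem_Iic, not_le] at hlt
    exact hs.2 (hball (by rw [ball_eq_Ioo]; exact ⟨hlt, by linarith [hs.1.2]⟩))
  have hpeak := tendsto_setIntegral_peak_smul_of_integrableOn_of_tendsto (μ := volume)
    measurableSet_Ioc measurableSet_Ioc subset_rfl self_mem_nhdsWithin measure_Ioc_lt_top.ne
    ((eventually_ge_atTop 0).mono fun k hk s _ => mul_nonneg hk (exp_pos _).le) huniform hmass
    (.of_forall fun k => Continuous.aestronglyMeasurable (by fun_prop)) hρ hc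
  refine hpeak.congr fun k => ?_
  rw [duhamel, ← intervalIntegral.integral_const_mul, intervalIntegral.integral_of_le ht.le]
  simp only [smul_eq_mul, mul_assoc]

lemma exists_abs_inv_sq_mul_duhamel_le {t : ℝ} {ρ : ℝ → ℝ} (ht : 0 < t)
    (hρ : IntegrableOn ρ (Ioc 0 t)) (hc : ContinuousWithinAt ρ (Ioc 0 t) t) (hne : ρ t ≠ 0) :
    ∃ D, ∀ n : ℕ, |((n : ℝ) ^ 2 * duhamel ((n : ℝ) ^ 2) ρ t)⁻¹| ≤ D := by
  have hlim := (tendsto_mul_duhamel ht hρ hc).comp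
    ((tendsto_pow_atTop two_ne_zero).comp tendsto_natCast_atTop_atTop)
  obtain ⟨D, hD⟩ := (hlim.inv₀ hne).abs.bddAbove_range
  exact ⟨D, fun n => hD (mem_range_self n)⟩

lemma summable_natCast_mul_div_duhamel {t : ℝ} {ρ : ℝ → ℝ} (ht : 0 < t)
    (hρ : IntegrableOn ρ (Ioc 0 t)) (hc : ContinuousWithinAt ρ (Ioc 0 t) t) (hne : ρ t ≠ 0)
    {c : ℕ → ℝ} (hs : Summable fun n : ℕ => |(n : ℝ) ^ 3 * c n|) :
    Summable fun n : ℕ => |n * (c n / duhamel ((n : ℝ) ^ 2) ρ t)| := by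
  obtain ⟨D, hD⟩ := exists_abs_inv_sq_mul_duhamel_le ht hρ hc hne
  refine (hs.mul_right D).of_nonneg_of_le (fun _ => abs_nonneg _) fun n => ?_
  calc |n * (c n / duhamel ((n : ℝ) ^ 2) ρ t)|
      = |(n : ℝ) ^ 3 * c n| * |((n : ℝ) ^ 2 * duhamel ((n : ℝ) ^ 2) ρ t)⁻¹| := by
        rw [← abs_mul]
        rcases eq_or_ne n 0 with rfl | hn
        · simp
        · have := Nat.cast_ne_zero (R := ℝ).2 hn
          field_simp
    _ ≤ |(n : ℝ) ^ 3 * c n| * D := by gcongr; exact hD n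

lemma summable_abs_pow_three_mul_sineCoeff {ψ ψ1 ψ2 ψ3 ψ4 : ℝ → ℝ}
    (hψ1 : ∀ x ∈ Icc 0 π, HasDerivWithinAt ψ (ψ1 x) (Icc 0 π) x)
    (hψ2 : ∀ x ∈ Icc 0 π, HasDerivWithinAt ψ1 (ψ2 x) (Icc 0 π) x)
    (hψ3 : ∀ x ∈ Icc 0 π, HasDerivWithinAt ψ2 (ψ3 x) (Icc 0 π) x)
    (hψ4 : ∀ x ∈ Icc 0 π, HasDerivWithinAt ψ3 (ψ4 x) (Icc 0 π) x)
    (hψ4L2 : MemLp ψ4 2 (volume.restrict (Ioc 0 π)))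
    (h0 : ψ 0 = 0) (hπ : ψ π = 0) (h0'' : ψ2 0 = 0) (hπ'' : ψ2 π = 0) :
    Summable fun n : ℕ => |(n : ℝ) ^ 3 * sineCoeff ψ n| := by
  have hψ2i : IntervalIntegrable ψ2 volume 0 π :=
    ContinuousOn.intervalIntegrable_of_Icc pi_pos.le fun x hx => (hψ3 x hx).continuousWithinAt
  have hψ4i : IntervalIntegrable ψ4 volume 0 π :=
    (intervalIntegrable_iff_integrableOn_Ioc_of_le pi_pos.le).2 (hψ4L2.integrable one_le_two)
  refine (summable_abs_div_natCast (summable_sq_sineCoeff hψ4L2)).congr fun n => ?_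
  have hfour : sineCoeff ψ4 n = (n : ℝ) ^ 4 * sineCoeff ψ n := by
    rw [sineCoeff_deriv_deriv hψ3 hψ4 hψ4i h0'' hπ'', sineCoeff_deriv_deriv hψ1 hψ2 hψ2i h0 hπ]
    ring
  rw [hfour, ← Nat.abs_cast n, ← abs_div, Nat.abs_cast]
  rcases eq_or_ne n 0 with rfl | hn
  · simp
  · have := Nat.cast_ne_zero (R := ℝ).2 hn
    field_simp

/-! ### Solving the heat equation mode by mode -/

/-- The solution of the heat equation with source `sineSeries a x * ρ t` and zero data on the
parabolic boundary. -/
def heatSeries (a : ℕ → ℝ) (ρ : ℝ → ℝ) (x t : ℝ) : ℝ :=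
  sineSeries (fun n => a n * duhamel ((n : ℝ) ^ 2) ρ t) x

lemma continuousOn_sineSeries_prod {c : ℕ → ℝ → ℝ} {s : Set ℝ} {B : ℕ → ℝ}
    (hc : ∀ n, ContinuousOn (c n) s) (hB : Summable B) (hcB : ∀ n, ∀ t ∈ s, |c n t| ≤ B n) :
    ContinuousOn (fun p : ℝ × ℝ => sineSeries (fun n => c n p.2) p.1) (univ ×ˢ s) :=
  continuousOn_tsum
    (fun n => ((hc n).comp continuousOn_snd fun _ hp => hp.2).mul (by fun_prop)) hB
    fun n p hp => (norm_mul_sin_le _ _).trans (hcB n p.2 hp.2)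

section HeatSeries

variable {T : ℝ} {ρ : ℝ → ℝ} (hρ : ContinuousOn ρ (Icc 0 T))

include hρ

lemma exists_abs_duhamel_sq_le : ∃ M, ∀ n : ℕ, ∀ t ∈ Icc 0 T,
    |duhamel ((n : ℝ) ^ 2) ρ t| ≤ M ∧ (n : ℝ) ^ 2 * |duhamel ((n : ℝ) ^ 2) ρ t| ≤ M := by
  obtain ⟨M, hM⟩ := isCompact_Icc.exists_bound_of_continuousOn hρ
  refine ⟨max (M * T) M, fun n t ht => ?_⟩
  have hMt : ∀ s ∈ Icc 0 t, |ρ s| ≤ M := fun s hs => hM s ⟨hs.1, hs.2.trans ht.2⟩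
  have hM0 : 0 ≤ M := (abs_nonneg _).trans (hMt t ⟨ht.1, le_rfl⟩)
  exact ⟨le_max_of_le_left ((abs_duhamel_le (sq_nonneg _) ht.1 hMt).trans
    (mul_le_mul_of_nonneg_left ht.2 hM0)),
    le_max_of_le_right (mul_abs_duhamel_le (sq_nonneg _) ht.1 hMt)⟩

variable {a : ℕ → ℝ} (ha : Summable fun n => |a n|)

include ha

lemma exists_summable_bound_heatSeries : ∃ B : ℕ → ℝ, Summable B ∧ ∀ n : ℕ, ∀ t ∈ Icc 0 T,
    |a n * duhamel ((n : ℝ) ^ 2) ρ t| ≤ B n ∧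
      |n * (n * (a n * duhamel ((n : ℝ) ^ 2) ρ t))| ≤ B n := by
  obtain ⟨M, hM⟩ := exists_abs_duhamel_sq_le hρ
  refine ⟨fun n => |a n| * M, ha.mul_right M, fun n t ht => ⟨?_, ?_⟩⟩
  · rw [abs_mul]
    exact mul_le_mul_of_nonneg_left (hM n t ht).1 (abs_nonneg _)
  · have hsplit : n * (n * (a n * duhamel ((n : ℝ) ^ 2) ρ t)) =
        a n * ((n : ℝ) ^ 2 * duhamel ((n : ℝ) ^ 2) ρ t) := by ring
    rw [hsplit, abs_mul, abs_mul _ (duhamel _ _ _), abs_of_nonneg (sq_nonneg (n : ℝ))]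
    exact mul_le_mul_of_nonneg_left (hM n t ht).2 (abs_nonneg _)

lemma summable_natCast_mul_natCast_mul_duhamel {t : ℝ} (ht : t ∈ Icc 0 T) :
    Summable fun n : ℕ => |n * (n * (a n * duhamel ((n : ℝ) ^ 2) ρ t))| :=
  let ⟨_, hB, hle⟩ := exists_summable_bound_heatSeries hρ ha
  hB.of_nonneg_of_le (fun _ => abs_nonneg _) fun n => (hle n t ht).2

lemma summable_abs_mul_duhamel {t : ℝ} (ht : t ∈ Icc 0 T) :
    Summable fun n : ℕ => |a n * duhamel ((n : ℝ) ^ 2) ρ t| :=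
  let ⟨_, hB, hle⟩ := exists_summable_bound_heatSeries hρ ha
  hB.of_nonneg_of_le (fun _ => abs_nonneg _) fun n => (hle n t ht).1

lemma heatSeries_add {σ : ℝ → ℝ} (hσ : ContinuousOn σ (Icc 0 T)) (x : ℝ) {t : ℝ}
    (ht : t ∈ Icc 0 T) :
    heatSeries a (fun s => ρ s + σ s) x t = heatSeries a ρ x t + heatSeries a σ x t := by
  have hint {τ : ℝ → ℝ} (hτ : ContinuousOn τ (Icc 0 T)) : IntervalIntegrable τ volume 0 t :=
    (hτ.mono (Icc_subset_Icc_right ht.2)).intervalIntegrable_of_Icc ht.1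
  simp only [heatSeries, duhamel_add _ (hint hρ) (hint hσ), mul_add]
  exact sineSeries_add (summable_abs_mul_duhamel hρ ha ht) (summable_abs_mul_duhamel hσ ha ht) x

lemma continuousOn_heatSeries :
    ContinuousOn (fun p : ℝ × ℝ => heatSeries a ρ p.1 p.2) (univ ×ˢ Icc 0 T) :=
  let ⟨_, hB, hle⟩ := exists_summable_bound_heatSeries hρ ha
  continuousOn_sineSeries_prod (fun _ => (continuousOn_duhamel hρ _).const_mul _) hB
    fun n t ht => (hle n t ht).1

lemma continuousOn_heatSeries_xx :
    ContinuousOn (fun p : ℝ × ℝ =>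
        -sineSeries (fun n => n * (n * (a n * duhamel ((n : ℝ) ^ 2) ρ p.2))) p.1)
      (univ ×ˢ Icc 0 T) :=
  let ⟨_, hB, hle⟩ := exists_summable_bound_heatSeries hρ ha
  (continuousOn_sineSeries_prod
    (fun _ => (((continuousOn_duhamel hρ _).const_mul _).const_mul _).const_mul _) hB
    fun n t ht => (hle n t ht).2).neg

lemma hasDerivAt_heatSeries_x (x : ℝ) {t : ℝ} (ht : t ∈ Icc 0 T) :
    HasDerivAt (fun x => heatSeries a ρ x t)
      (cosineSeries (fun n => n * (a n * duhamel ((n : ℝ) ^ 2) ρ t)) x) x :=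
  hasDerivAt_sineSeries (summable_abs_of_summable_abs_natCast_mul
    (summable_natCast_mul_natCast_mul_duhamel hρ ha ht)) x

lemma hasDerivAt_heatSeries_t (x : ℝ) {t : ℝ} (ht : t ∈ Ioo 0 T) :
    HasDerivAt (heatSeries a ρ x)
      (-sineSeries (fun n => n * (n * (a n * duhamel ((n : ℝ) ^ 2) ρ t))) x +
        sineSeries a x * ρ t) t := by
  obtain ⟨B, hB, hle⟩ := exists_summable_bound_heatSeries hρ ha
  obtain ⟨M, hM⟩ := isCompact_Icc.exists_bound_of_continuousOn hρ
  have hderiv (n : ℕ) (s : ℝ) (hs : s ∈ Ioo 0 T) :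
      HasDerivAt (fun s => a n * duhamel ((n : ℝ) ^ 2) ρ s * sin (n * x))
        ((a n * ρ s - n * (n * (a n * duhamel ((n : ℝ) ^ 2) ρ s))) * sin (n * x)) s :=
    (((hasDerivAt_duhamel hρ _ hs).const_mul (a n)).mul_const _).congr_deriv (by ring)
  have hbound (n : ℕ) (s : ℝ) (hs : s ∈ Ioo 0 T) :
      ‖(a n * ρ s - n * (n * (a n * duhamel ((n : ℝ) ^ 2) ρ s))) * sin (n * x)‖ ≤
        |a n| * M + B n := by
    refine (norm_mul_sin_le _ _).trans ((abs_sub _ _).trans (add_le_add ?_ ?_))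
    · rw [abs_mul]
      gcongr
      exact hM s (Ioo_subset_Icc_self hs)
    · exact (hle n s (Ioo_subset_Icc_self hs)).2
  have ht' := Ioo_subset_Icc_self ht
  have hsum := summable_natCast_mul_natCast_mul_duhamel hρ ha ht'
  refine (hasDerivAt_tsum_of_isPreconnected ((ha.mul_right M).add hB) isOpen_Ioo
    isPreconnected_Ioo hderiv hbound ht
      (summable_mul_sin (summable_abs_mul_duhamel hρ ha ht') x) ht).congr_deriv ?_
  rw [sineSeries, sineSeries, ← tsum_mul_right, neg_add_eq_sub,
    ← ((summable_mul_sin ha x).mul_right _).tsum_sub (summable_mul_sin hsum x)]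
  exact tsum_congr fun n => by ring

lemma isClassicalSolution_heatSeries :
    IsClassicalSolution T (fun x t => sineSeries a x * ρ t) (heatSeries a ρ) := by
  have hsub : Ioo 0 π ×ˢ Ioo 0 T ⊆ univ ×ˢ Icc 0 T :=
    prod_mono (subset_univ _) Ioo_subset_Icc_self
  have hxx := (continuousOn_heatSeries_xx hρ ha).mono hsub
  refine ⟨(continuousOn_heatSeries hρ ha).mono (prod_mono_left (subset_univ _)),
    fun x _ => by simp [heatSeries, sineSeries], fun t _ => by simp [heatSeries],
    fun x t => -sineSeries (fun n => n * (n * (a n * duhamel ((n : ℝ) ^ 2) ρ t))) x +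
        sineSeries a x * ρ t,
    fun x t => cosineSeries (fun n => n * (a n * duhamel ((n : ℝ) ^ 2) ρ t)) x,
    fun x t => -sineSeries (fun n => n * (n * (a n * duhamel ((n : ℝ) ^ 2) ρ t))) x, ?_, hxx, ?_⟩
  · exact hxx.add (((continuous_sineSeries ha).comp continuous_fst).continuousOn.mul
      (hρ.comp continuousOn_snd fun p hp => (hsub hp).2))
  · intro x _ t ht
    have ht' := Ioo_subset_Icc_self ht
    exact ⟨hasDerivAt_heatSeries_t hρ ha x ht, hasDerivAt_heatSeries_x hρ ha x ht',
      hasDerivAt_cosineSeries (summable_natCast_mul_natCast_mul_duhamel hρ ha ht') x, rfl⟩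

end HeatSeries

/-! ### Maximum principle -/

lemma second_deriv_nonpos_of_isLocalMax {g g' : ℝ → ℝ} {x g'' : ℝ} (hmax : IsLocalMax g x)
    (hg : ∀ᶠ y in 𝓝 x, HasDerivAt g (g' y) y) (hg' : HasDerivAt g' g'' x) : g'' ≤ 0 := by
  have hderiv : deriv g =ᶠ[𝓝 x] g' := hg.mono fun y hy => hy.deriv
  have hderiv2 : deriv (deriv g) x = g'' := hderiv.deriv_eq.trans hg'.deriv
  by_contra! hpos
  have hmin : IsLocalMin g x := isLocalMin_of_deriv_deriv_pos (hpos.trans_eq hderiv2.symm)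
    hmax.deriv_eq_zero hg.self_of_nhds.continuousAt
  have hconst : g =ᶠ[𝓝 x] fun _ => g x := by
    filter_upwards [hmax, hmin] with y h1 h2 using le_antisymm h1 h2
  rw [hconst.deriv.deriv_eq] at hderiv2
  simp only [deriv_const'] at hderiv2
  exact hpos.ne hderiv2

lemma deriv_nonneg_of_forall_Ioo_le {g : ℝ → ℝ} {g' r t : ℝ} (hg : HasDerivAt g g' t) (hr : r < t)
    (hmax : ∀ s ∈ Ioo r t, g s ≤ g t) : 0 ≤ g' := by
  have hslope : Tendsto (slope g t) (𝓝[<] t) (𝓝 g') :=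
    (hasDerivWithinAt_iff_tendsto_slope' (by simp)).1 hg.hasDerivWithinAt
  refine ge_of_tendsto hslope ?_
  filter_upwards [Ioo_mem_nhdsLT hr] with s hs
  rw [slope_def_field]
  exact div_nonneg_of_nonpos (sub_nonpos.2 (hmax s hs)) (sub_nonpos.2 hs.2.le)

namespace IsClassicalSolution

variable {T : ℝ} {F G u v : ℝ → ℝ → ℝ}

lemma congr_source (hu : IsClassicalSolution T F u)
    (hFG : ∀ x ∈ Ioo 0 π, ∀ t ∈ Ioo 0 T, F x t = G x t) : IsClassicalSolution T G u := by
  obtain ⟨hc, h0, hb, ut, ux, uxx, hut, huxx, h⟩ := hu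
  refine ⟨hc, h0, hb, ut, ux, uxx, hut, huxx, fun x hx t ht => ?_⟩
  rw [← hFG x hx t ht]
  exact h x hx t ht

lemma sub (hu : IsClassicalSolution T F u) (hv : IsClassicalSolution T G v) :
    IsClassicalSolution T (fun x t => F x t - G x t) fun x t => u x t - v x t := by
  obtain ⟨uc, u0, ub, ut, ux, uxx, utc, uxxc, hu⟩ := hu
  obtain ⟨vc, v0, vb, vt, vx, vxx, vtc, vxxc, hv⟩ := hv
  refine ⟨uc.sub vc, fun x hx => by simp [u0 x hx, v0 x hx],
    fun t ht => by simp [ub t ht, vb t ht], fun x t => ut x t - vt x t,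
    fun x t => ux x t - vx x t, fun x t => uxx x t - vxx x t, utc.sub vtc, uxxc.sub vxxc,
    fun x hx t ht => ?_⟩
  obtain ⟨ut', ux', uxx', ueq⟩ := hu x hx t ht
  obtain ⟨vt', vx', vxx', veq⟩ := hv x hx t ht
  exact ⟨ut'.sub vt', ux'.sub vx', uxx'.sub vxx', by
    simp only [ueq, veq]; ring⟩

lemma le_source_of_max (hu : IsClassicalSolution T F u) {ε y s : ℝ} (hy : y ∈ Ioo 0 π)
    (hs : s ∈ Ioo 0 T) (hmaxx : ∀ x ∈ Ioo 0 π, u x s ≤ u y s)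
    (hmaxt : ∀ t ∈ Ioo 0 s, u y t - ε * t ≤ u y s - ε * s) : ε ≤ F y s := by
  obtain ⟨-, -, -, ut, ux, uxx, -, -, h⟩ := hu
  have hnhds : Ioo 0 π ∈ 𝓝 y := Ioo_mem_nhds hy.1 hy.2
  obtain ⟨ht, -, hxx, heq⟩ := h y hy s hs
  have hxx_nonpos : uxx y s ≤ 0 := second_deriv_nonpos_of_isLocalMax (mem_of_superset hnhds hmaxx)
    (mem_of_superset hnhds fun x hx => (h x hx s hs).2.1) hxx
  have ht_nonneg : 0 ≤ ut y s - ε * 1 :=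
    deriv_nonneg_of_forall_Ioo_le (ht.sub ((hasDerivAt_id s).const_mul ε)) hs.1 hmaxt
  linarith

variable (hu : IsClassicalSolution T F u) (hF : ∀ x ∈ Ioo 0 π, ∀ t ∈ Ioo 0 T, F x t ≤ 0)

include hu hF

lemma le_mul_of_source_nonpos {ε : ℝ} (hε : 0 < ε) {x t : ℝ} (hx : x ∈ Icc 0 π)
    (ht : t ∈ Ico 0 T) : u x t ≤ ε * t := by
  have hsub : Icc 0 π ×ˢ Icc 0 t ⊆ Icc 0 π ×ˢ Icc 0 T :=
    prod_mono_right (Icc_subset_Icc_right ht.2.le)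
  obtain ⟨⟨y, s⟩, ⟨hy, hs⟩, hmax⟩ :=
    (isCompact_Icc.prod isCompact_Icc).exists_isMaxOn ⟨(x, t), hx, ht.1, le_rfl⟩
      (f := fun p : ℝ × ℝ => u p.1 p.2 - ε * p.2) ((hu.1.mono hsub).sub (by fun_prop))
  have hmax' (x' : ℝ) (hx' : x' ∈ Icc 0 π) (t' : ℝ) (ht' : t' ∈ Icc 0 t) :
      u x' t' - ε * t' ≤ u y s - ε * s :=
    hmax (show (x', t') ∈ Icc 0 π ×ˢ Icc 0 t from ⟨hx', ht'⟩)
  suffices hsup : u y s - ε * s ≤ 0 by linarith [hmax' x hx t ⟨ht.1, le_rfl⟩]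
  have hbdry (h0 : u y s = 0) : u y s - ε * s ≤ 0 := by
    rw [h0, zero_sub]
    exact neg_nonpos.2 (mul_nonneg hε.le hs.1)
  have hsT : s ∈ Icc 0 T := ⟨hs.1, hs.2.trans ht.2.le⟩
  rcases hs.1.eq_or_lt with rfl | hs0
  · exact hbdry (hu.2.1 y hy)
  rcases hy.1.eq_or_lt with rfl | hy0
  · exact hbdry (hu.2.2.1 s hsT).1
  rcases hy.2.eq_or_lt with rfl | hyπ
  · exact hbdry (hu.2.2.1 s hsT).2
  have hsource : ε ≤ F y s := hu.le_source_of_max ⟨hy0, hyπ⟩ ⟨hs0, hs.2.trans_lt ht.2⟩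
    (fun x' hx' => by linarith [hmax' x' (Ioo_subset_Icc_self hx') s hs])
    fun t' ht' => hmax' y hy t' ⟨ht'.1.le, ht'.2.le.trans hs.2⟩
  linarith [hF y ⟨hy0, hyπ⟩ s ⟨hs0, hs.2.trans_lt ht.2⟩]

lemma nonpos_of_source_nonpos {x t : ℝ} (hx : x ∈ Icc 0 π) (ht : t ∈ Icc 0 T) : u x t ≤ 0 := by
  have hIco : ∀ s ∈ Ico 0 T, u x s ≤ 0 := by
    intro s hs
    have hlim : Tendsto (fun ε => ε * s) (𝓝[>] 0) (𝓝 0) := by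
      simpa using ((continuous_mul_const s).tendsto 0).mono_left nhdsWithin_le_nhds
    exact ge_of_tendsto hlim (eventually_mem_nhdsWithin.mono fun ε hε =>
      hu.le_mul_of_source_nonpos hF hε hx hs)
  rcases ht.1.eq_or_lt with rfl | ht0
  · exact (hu.2.1 x hx).le
  have hclosure : closure (Ico 0 T) = Icc 0 T := closure_Ico (ht0.trans_le ht.2).ne
  refine le_on_closure hIco ?_ continuousOn_const (hclosure.symm ▸ ht)
  rw [hclosure]
  exact hu.1.comp (f := fun t => (x, t)) (by fun_prop) fun t ht => ⟨hx, ht⟩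

omit hF in
lemma unique (hv : IsClassicalSolution T F v) {x t : ℝ} (hx : x ∈ Icc 0 π) (ht : t ∈ Icc 0 T) :
    u x t = v x t := by
  refine le_antisymm (sub_nonpos.1 ?_) (sub_nonpos.1 ?_)
  · exact (hu.sub hv).nonpos_of_source_nonpos (fun _ _ _ _ => (sub_self _).le) hx ht
  · exact (hv.sub hu).nonpos_of_source_nonpos (fun _ _ _ _ => (sub_self _).le) hx ht

end IsClassicalSolution

/-! ### Averaging of rapidly oscillating sources -/

lemma exists_mem_Icc_eq_of_add_eq {β : Type*} {c : ℝ} (hc : 0 < c) {q : ℝ → β}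
    (hq : ∀ τ, 0 ≤ τ → q (τ + c) = q τ) {τ : ℝ} (hτ : 0 ≤ τ) : ∃ τ' ∈ Icc 0 c, q τ = q τ' := by
  have hmul (n : ℕ) (x : ℝ) (hx : 0 ≤ x) : q (x + n * c) = q x := by
    induction n with
    | zero => simp
    | succ n ih =>
      rw [← ih, ← hq (x + n * c) (by positivity)]
      congr 1
      push_cast
      ring
  have hfloor := (le_div_iff₀ hc).1 (Nat.floor_le (div_nonneg hτ hc.le))
  have hlt := (div_lt_iff₀ hc).1 (Nat.lt_floor_add_one (τ / c))
  refine ⟨τ - ⌊τ / c⌋₊ * c, ⟨by linarith, by linarith⟩, ?_⟩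
  rw [← hmul ⌊τ / c⌋₊ (τ - ⌊τ / c⌋₊ * c) (by linarith), sub_add_cancel]

section ZeroMean

variable {p : ℝ → ℝ} {c : ℝ} (hc : 0 < c) (hp : ContinuousOn p (Ici 0))
  (hper : ∀ τ, 0 ≤ τ → p (τ + c) = p τ) (hmean : ∫ τ in (0 : ℝ)..c, p τ = 0)

include hc hp hper hmean

lemma exists_abs_integral_le_of_mean_zero :
    ∃ B, ∀ x, 0 ≤ x → |∫ τ in (0 : ℝ)..x, p τ| ≤ B := by
  have hint {x y : ℝ} (hx : 0 ≤ x) (hy : 0 ≤ y) : IntervalIntegrable p volume x y :=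
    (hp.mono fun _ hz => (le_min hx hy).trans hz.1).intervalIntegrable
  have hperiod (x : ℝ) (hx : 0 ≤ x) :
      ∫ τ in (0 : ℝ)..(x + c), p τ = ∫ τ in (0 : ℝ)..x, p τ := by
    rw [← intervalIntegral.integral_add_adjacent_intervals (hint le_rfl hc.le)
      (hint hc.le (by positivity)), hmean, zero_add]
    have hshift := intervalIntegral.integral_comp_add_right (a := 0) (b := x) p c
    rw [zero_add] at hshift
    rw [← hshift]
    exact intervalIntegral.integral_congr fun τ hτ => hper τ (uIcc_of_le hx ▸ hτ).1
  have hcont : ContinuousOn (fun x => ∫ τ in (0 : ℝ)..x, p τ) (Icc 0 c) :=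
    uIcc_of_le hc.le ▸ intervalIntegral.continuousOn_primitive_interval
      (uIcc_of_le hc.le ▸ (hp.mono fun _ hz => hz.1).integrableOn_Icc)
  obtain ⟨B, hB⟩ := isCompact_Icc.exists_bound_of_continuousOn hcont
  refine ⟨B, fun x hx => ?_⟩
  obtain ⟨y, hy, hxy⟩ := exists_mem_Icc_eq_of_add_eq
    (q := fun x => ∫ τ in (0 : ℝ)..x, p τ) hc hperiod hx
  exact hxy ▸ hB y hy

lemma tendsto_integral_comp_mul_of_mean_zero {x y : ℝ} (hx : 0 ≤ x) (hy : 0 ≤ y) :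
    Tendsto (fun ω => ∫ s in x..y, p (ω * s)) atTop (𝓝 0) := by
  obtain ⟨B, hB⟩ := exists_abs_integral_le_of_mean_zero hc hp hper hmean
  have hlim : Tendsto (fun ω : ℝ => 2 * B / ω) atTop (𝓝 0) :=
    tendsto_const_nhds.div_atTop tendsto_id
  refine squeeze_zero_norm' ?_ hlim
  filter_upwards [eventually_gt_atTop 0] with ω hω
  have hint {z : ℝ} (hz : 0 ≤ z) : IntervalIntegrable p volume 0 (ω * z) :=
    (hp.mono fun _ hw => (le_min le_rfl (by positivity)).trans hw.1).intervalIntegrable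
  rw [intervalIntegral.integral_comp_mul_left p hω.ne',
    ← intervalIntegral.integral_interval_sub_left (hint hy) (hint hx), norm_smul, norm_eq_abs,
    abs_of_pos (inv_pos.2 hω), ← div_eq_inv_mul]
  gcongr
  refine (abs_sub _ _).trans ?_
  linarith [hB (ω * x) (by positivity), hB (ω * y) (by positivity)]

end ZeroMean

lemma tendsto_integral_of_forall_short_interval {ι : Type*} {l : Filter ι} {φ : ι → ℝ → ℝ} {b : ℝ}
    (hb : 0 < b) (hφ : ∀ᶠ i in l, IntervalIntegrable (φ i) volume 0 b)
    (hshort : ∀ η > 0, ∃ δ > 0, ∀ x y, 0 ≤ x → x < y → y ≤ b → y - x < δ →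
      ∀ᶠ i in l, |∫ s in x..y, φ i s| ≤ η * (y - x)) :
    Tendsto (fun i => ∫ s in (0 : ℝ)..b, φ i s) l (𝓝 0) := by
  rw [Metric.tendsto_nhds]
  intro ε hε
  obtain ⟨δ, hδ, hshort⟩ := hshort (ε / (2 * b)) (by positivity)
  obtain ⟨K, hK⟩ := exists_nat_gt (b / δ)
  have hK0 : (0 : ℝ) < K := (div_pos hb hδ).trans hK
  have hstep : b / K < δ := (div_lt_comm₀ hδ hK0).1 hK
  let p (k : ℕ) : ℝ := k * (b / K)
  have hp0 : p 0 = 0 := by simp [p]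
  have hpK : p K = b := mul_div_cancel₀ b hK0.ne'
  have hp_nonneg (k : ℕ) : 0 ≤ p k := by positivity
  have hp_le {k : ℕ} (hk : k ≤ K) : p k ≤ b :=
    (mul_le_mul_of_nonneg_right (Nat.cast_le.2 hk) (by positivity)).trans_eq hpK
  have hp_sub (k : ℕ) : p (k + 1) - p k = b / K := by
    simp only [p]
    push_cast
    ring
  have hp_lt (k : ℕ) : p k < p (k + 1) := sub_pos.1 ((hp_sub k).symm ▸ by positivity)
  have hpieces : ∀ᶠ i in l, ∀ k ∈ Finset.range K,
      |∫ s in p k..p (k + 1), φ i s| ≤ ε / (2 * b) * (b / K) :=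
    (eventually_all_finset _).2 fun k hk => hp_sub k ▸ hshort _ _ (hp_nonneg k) (hp_lt k)
      (hp_le (Finset.mem_range.1 hk)) ((hp_sub k).trans_lt hstep)
  filter_upwards [hφ, hpieces] with i hi hpieces
  have hint (k : ℕ) (hk : k < K) : IntervalIntegrable (φ i) volume (p k) (p (k + 1)) := by
    refine hi.mono_set ?_
    rw [uIcc_of_le (hp_lt k).le, uIcc_of_le hb.le]
    exact Icc_subset_Icc (hp_nonneg k) (hp_le hk)
  calc dist (∫ s in (0 : ℝ)..b, φ i s) 0
      = |∑ k ∈ Finset.range K, ∫ s in p k..p (k + 1), φ i s| := by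
        rw [dist_zero_right, norm_eq_abs, intervalIntegral.sum_integral_adjacent_intervals hint,
          hp0, hpK]
    _ ≤ ∑ k ∈ Finset.range K, ε / (2 * b) * (b / K) :=
        (Finset.abs_sum_le_sum_abs _ _).trans (Finset.sum_le_sum hpieces)
    _ = ε / 2 := by
        rw [Finset.sum_const, Finset.card_range, nsmul_eq_mul]
        field_simp
    _ < ε := half_lt_self hε

section Averaging

variable {g : ℝ → ℝ → ℝ} {b c : ℝ} (hc : 0 < c)
  (hg : ContinuousOn (fun p : ℝ × ℝ => g p.1 p.2) (Icc 0 b ×ˢ Ici 0))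
  (hper : ∀ t ∈ Icc 0 b, ∀ τ, 0 ≤ τ → g t (τ + c) = g t τ)

include hg in
lemma continuousOn_comp_mul {ω : ℝ} (hω : 0 ≤ ω) : ContinuousOn (fun s => g s (ω * s)) (Icc 0 b) :=
  hg.comp (f := fun s => (s, ω * s)) (by fun_prop) fun _ hs => ⟨hs, mul_nonneg hω hs.1⟩

include hg in
lemma continuousOn_Ici_of_mem {t : ℝ} (ht : t ∈ Icc 0 b) : ContinuousOn (g t) (Ici 0) :=
  hg.comp (f := fun τ => (t, τ)) (by fun_prop) fun _ hτ => ⟨ht, hτ⟩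

include hc hg hper

lemma exists_abs_le_of_periodic : ∃ M, ∀ t ∈ Icc 0 b, ∀ τ, 0 ≤ τ → |g t τ| ≤ M := by
  obtain ⟨M, hM⟩ := (isCompact_Icc.prod isCompact_Icc).exists_bound_of_continuousOn
    (hg.mono (prod_mono_right (Icc_subset_Ici_self (a := c) (b := 0))))
  refine ⟨M, fun t ht τ hτ => ?_⟩
  obtain ⟨τ', hτ', heq⟩ := exists_mem_Icc_eq_of_add_eq hc (hper t ht) hτ
  exact heq ▸ hM (t, τ') ⟨ht, hτ'⟩

lemma exists_abs_sub_le_of_periodic {η : ℝ} (hη : 0 < η) : ∃ δ > 0, ∀ t ∈ Icc 0 b, ∀ t' ∈ Icc 0 b,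
    |t - t'| < δ → ∀ τ, 0 ≤ τ → |g t τ - g t' τ| ≤ η := by
  have huc := (isCompact_Icc.prod isCompact_Icc).uniformContinuousOn_of_continuous
    (hg.mono (prod_mono_right (Icc_subset_Ici_self (a := c) (b := 0))))
  obtain ⟨δ, hδ, huc⟩ := Metric.uniformContinuousOn_iff.1 huc η hη
  refine ⟨δ, hδ, fun t ht t' ht' hd τ hτ => ?_⟩
  obtain ⟨τ', hτ', heq⟩ := exists_mem_Icc_eq_of_add_eq (q := fun τ => (g t τ, g t' τ)) hc
    (fun τ hτ => Prod.ext (hper t ht τ hτ) (hper t' ht' τ hτ)) hτ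
  rw [Prod.mk.injEq] at heq
  rw [heq.1, heq.2]
  refine (huc (t, τ') ⟨ht, hτ'⟩ (t', τ') ⟨ht', hτ'⟩ ?_).le
  simpa [Prod.dist_eq, Real.dist_eq, hδ] using hd

variable (hmean : ∀ t ∈ Icc 0 b, ∫ τ in (0 : ℝ)..c, g t τ = 0)

include hmean

-- On a short interval the slow variable is frozen at the left end point.
lemma tendsto_integral_comp_mul_of_periodic (hb : 0 < b) :
    Tendsto (fun ω => ∫ s in (0 : ℝ)..b, g s (ω * s)) atTop (𝓝 0) := by
  refine tendsto_integral_of_forall_short_interval hb ?_ fun η hη => ?_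
  · filter_upwards [eventually_ge_atTop 0] with ω hω
    exact (continuousOn_comp_mul hg hω).intervalIntegrable_of_Icc hb.le
  obtain ⟨δ, hδ, hclose⟩ := exists_abs_sub_le_of_periodic hc hg hper (half_pos hη)
  refine ⟨δ, hδ, fun x y hx hxy hy hyx => ?_⟩
  have hxb : x ∈ Icc 0 b := ⟨hx, hxy.le.trans hy⟩
  have hfrozen := tendsto_integral_comp_mul_of_mean_zero hc (continuousOn_Ici_of_mem hg hxb)
    (hper x hxb) (hmean x hxb) hx (hx.trans hxy.le)
  filter_upwards [eventually_ge_atTop 0,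
    hfrozen.eventually (Metric.ball_mem_nhds 0 (mul_pos (half_pos hη) (sub_pos.2 hxy)))]
    with ω hω hsmall
  have hxyb : Icc x y ⊆ Icc 0 b := Icc_subset_Icc hx hy
  have hint : IntervalIntegrable (fun s => g s (ω * s)) volume x y :=
    ((continuousOn_comp_mul hg hω).mono hxyb).intervalIntegrable_of_Icc hxy.le
  have hint' : IntervalIntegrable (fun s => g x (ω * s)) volume x y :=
    ((continuousOn_Ici_of_mem hg hxb).comp (f := fun s => ω * s) (by fun_prop)
      fun s hs => mul_nonneg hω (hxyb hs).1).intervalIntegrable_of_Icc hxy.le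
  have hdiff : |∫ s in x..y, (g s (ω * s) - g x (ω * s))| ≤ η / 2 * (y - x) := by
    rw [← abs_of_pos (sub_pos.2 hxy), ← norm_eq_abs]
    refine intervalIntegral.norm_integral_le_of_norm_le_const fun s hs => ?_
    rw [uIoc_of_le hxy.le] at hs
    have hsb := hxyb (Ioc_subset_Icc_self hs)
    refine hclose s hsb x hxb ?_ _ (mul_nonneg hω hsb.1)
    rw [abs_of_pos (sub_pos.2 hs.1)]
    linarith [hs.2]
  rw [dist_zero_right, norm_eq_abs] at hsmall
  rw [intervalIntegral.integral_sub hint hint'] at hdiff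
  linarith [abs_sub_abs_le_abs_sub (∫ s in x..y, g s (ω * s)) (∫ s in x..y, g x (ω * s))]

lemma tendsto_duhamel_comp_mul (k : ℝ) (hb : 0 < b) :
    Tendsto (fun ω => duhamel k (fun s => g s (ω * s)) b) atTop (𝓝 0) :=
  tendsto_integral_comp_mul_of_periodic (g := fun s τ => exp (-k * (b - s)) * g s τ) hc
    (.mul (by fun_prop) hg) (fun t ht τ hτ => by simp only [hper t ht τ hτ])
    (fun t ht => by rw [intervalIntegral.integral_const_mul, hmean t ht, mul_zero]) hb

lemma tendsto_tsum_abs_mul_duhamel_comp_mul {a : ℕ → ℝ} (ha : Summable fun n => |a n|)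
    (hb : 0 < b) :
    Tendsto (fun ω => ∑' n : ℕ, |a n * duhamel ((n : ℝ) ^ 2) (fun s => g s (ω * s)) b|) atTop
      (𝓝 0) := by
  obtain ⟨M, hM⟩ := exists_abs_le_of_periodic hc hg hper
  rw [← tsum_zero (β := ℕ)]
  refine tendsto_tsum_of_dominated_convergence (ha.mul_right (M * b)) (fun n => ?_) ?_
  · simpa using ((tendsto_duhamel_comp_mul hc hg hper hmean _ hb).const_mul (a n)).abs
  · filter_upwards [eventually_ge_atTop 0] with ω hω n
    rw [norm_eq_abs, abs_abs, abs_mul]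
    gcongr
    exact abs_duhamel_le (sq_nonneg _) hb.le fun s hs => hM s hs _ (mul_nonneg hω hs.1)

lemma tendstoUniformly_heatSeries_add {a : ℕ → ℝ} (ha : Summable fun n => |a n|) {ρ : ℝ → ℝ}
    (hρ : ContinuousOn ρ (Icc 0 b)) (hb : 0 < b) :
    TendstoUniformly (fun ω x => heatSeries a (fun t => ρ t + g t (ω * t)) x b)
      (fun x => heatSeries a ρ x b) atTop := by
  rw [Metric.tendstoUniformly_iff]
  intro ε hε
  filter_upwards [eventually_ge_atTop 0,
    (tendsto_tsum_abs_mul_duhamel_comp_mul hc hg hper hmean ha hb).eventually_lt_const hε]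
    with ω hω hsmall x
  have hgω := continuousOn_comp_mul hg hω
  have hb' : b ∈ Icc 0 b := ⟨hb.le, le_rfl⟩
  rw [heatSeries_add hρ ha hgω x hb', dist_self_add_right, norm_eq_abs]
  exact (abs_sineSeries_le (summable_abs_mul_duhamel hgω ha hb') x).trans_lt hsmall

end Averaging

/-! ### Problem 2 in terms of sine coefficients -/

lemma IsC1.add {f g : ℝ → ℝ} (hf : IsC1 f) (hg : IsC1 g) : IsC1 fun x => f x + g x := by
  obtain ⟨f', hf'c, hf'⟩ := hf
  obtain ⟨g', hg'c, hg'⟩ := hg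
  exact ⟨fun x => f' x + g' x, hf'c.add hg'c, fun x hx => (hf' x hx).add (hg' x hx)⟩

lemma isC1_sin_mul (c : ℝ) : IsC1 fun x => sin (c * x) :=
  ⟨fun x => c * cos (c * x), by fun_prop, fun x _ => (hasDerivAt_sin_mul c x).hasDerivWithinAt⟩

lemma isClassicalSolution_heatSeries_sineCoeff {T : ℝ} {f ρ : ℝ → ℝ} (hf : IsC1 f) (h0 : f 0 = 0)
    (hπ : f π = 0) (hρ : ContinuousOn ρ (Icc 0 T)) :
    IsClassicalSolution T (fun x t => f x * ρ t) (heatSeries (sineCoeff f) ρ) :=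
  (isClassicalSolution_heatSeries hρ (hf.summable_abs_sineCoeff h0 hπ)).congr_source
    fun x hx t _ => by rw [hf.sineSeries_sineCoeff h0 hπ (Ioo_subset_Icc_self hx)]

section Problem2

variable {T t₀ c : ℝ} {r0 : ℝ → ℝ} {r1 : ℝ → ℝ → ℝ} {ψ f : ℝ → ℝ} (ht₀ : t₀ ∈ Ioc 0 T)
  (hc : 0 < c) (hr0 : ContinuousOn r0 (Icc 0 T))
  (hr1 : ContinuousOn (fun p : ℝ × ℝ => r1 p.1 p.2) (Icc 0 T ×ˢ Ici 0))
  (hper : ∀ t ∈ Icc 0 T, ∀ τ ∈ Ici 0, r1 t (τ + c) = r1 t τ)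
  (hmean : ∀ t ∈ Icc 0 T, ∫ τ in (0 : ℝ)..c, r1 t τ = 0)

include ht₀ hc hr0 hr1 hper hmean

lemma solvesProblem2_iff_eqOn_heatSeries (hf : IsC1 f) (h0 : f 0 = 0) (hπ : f π = 0) :
    SolvesProblem2 T t₀ r0 r1 ψ f ↔
      EqOn ψ (fun x => heatSeries (sineCoeff f) r0 x t₀) (Icc 0 π) := by
  have hsub : Icc 0 t₀ ⊆ Icc 0 T := Icc_subset_Icc_right ht₀.2
  have hsol (ω : ℝ) (hω : 1 ≤ ω) : IsClassicalSolution T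
      (fun x t => f x * (r0 t + r1 t (ω * t)))
      (heatSeries (sineCoeff f) fun t => r0 t + r1 t (ω * t)) :=
    isClassicalSolution_heatSeries_sineCoeff hf h0 hπ
      (hr0.add (continuousOn_comp_mul hr1 (zero_le_one.trans hω)))
  have hlim := tendstoUniformly_heatSeries_add hc (hr1.mono (prod_mono_left hsub))
    (fun t ht => hper t (hsub ht)) (fun t ht => hmean t (hsub ht))
    (hf.summable_abs_sineCoeff h0 hπ) (hr0.mono hsub) ht₀.1
  constructor
  · rintro ⟨-, -, -, h⟩ x hx
    refine tendsto_nhds_unique (Metric.tendsto_nhds.2 fun ε hε => ?_) (hlim.tendsto_at x)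
    obtain ⟨ω₀, -, hω₀⟩ := h _ hsol (ε / 2) (half_pos hε)
    filter_upwards [eventually_ge_atTop ω₀] with ω hω
    exact (hω₀ ω hω x hx).trans_lt (half_lt_self hε)
  · refine fun hψ => ⟨hf, h0, hπ, fun u hu ε hε => ?_⟩
    obtain ⟨ω₀, hω₀⟩ := eventually_atTop.1 (Metric.tendstoUniformly_iff.1 hlim ε hε)
    refine ⟨max ω₀ 1, le_max_right _ _, fun ω hω x hx => ?_⟩
    have hω1 : 1 ≤ ω := (le_max_right _ _).trans hω
    rw [(hu ω hω1).unique (hsol ω hω1) hx (Ioc_subset_Icc_self ht₀), hψ hx, abs_sub_comm]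
    exact (hω₀ ω ((le_max_left _ _).trans hω) x).le

variable (hψ : IsC1 ψ) (hψ0 : ψ 0 = 0) (hψπ : ψ π = 0)

include hψ hψ0 hψπ

lemma solvesProblem2_iff_sineCoeff (hf : IsC1 f) (h0 : f 0 = 0) (hπ : f π = 0) :
    SolvesProblem2 T t₀ r0 r1 ψ f ↔
      ∀ n : ℕ, sineCoeff ψ n = sineCoeff f n * duhamel ((n : ℝ) ^ 2) r0 t₀ := by
  rw [solvesProblem2_iff_eqOn_heatSeries ht₀ hc hr0 hr1 hper hmean hf h0 hπ]
  refine ⟨fun h n => ?_, fun h x hx => ?_⟩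
  · rcases eq_or_ne n 0 with rfl | hn
    · simp
    · rw [sineCoeff_congr h]
      exact sineCoeff_sineSeries (summable_abs_mul_duhamel hr0 (hf.summable_abs_sineCoeff h0 hπ)
        (Ioc_subset_Icc_self ht₀)) hn
  · rw [← hψ.sineSeries_sineCoeff hψ0 hψπ hx, funext h]
    rfl

lemma solvesProblem2_sineSeries (hne : ∀ n : ℕ, n ≠ 0 → duhamel ((n : ℝ) ^ 2) r0 t₀ ≠ 0)
    (hs : Summable fun n : ℕ => |n * (sineCoeff ψ n / duhamel ((n : ℝ) ^ 2) r0 t₀)|) :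
    SolvesProblem2 T t₀ r0 r1 ψ
      (sineSeries fun n => sineCoeff ψ n / duhamel ((n : ℝ) ^ 2) r0 t₀) := by
  rw [solvesProblem2_iff_sineCoeff ht₀ hc hr0 hr1 hper hmean hψ hψ0 hψπ (isC1_sineSeries hs)
    (sineSeries_zero_right _) (sineSeries_pi _)]
  intro n
  rcases eq_or_ne n 0 with rfl | hn
  · simp
  · rw [sineCoeff_sineSeries (summable_abs_of_summable_abs_natCast_mul hs) hn,
      div_mul_cancel₀ _ (hne n hn)]

lemma SolvesProblem2.eqOn_sineSeries (hne : ∀ n : ℕ, n ≠ 0 → duhamel ((n : ℝ) ^ 2) r0 t₀ ≠ 0)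
    (hf : SolvesProblem2 T t₀ r0 r1 ψ f) :
    EqOn f (sineSeries fun n => sineCoeff ψ n / duhamel ((n : ℝ) ^ 2) r0 t₀) (Icc 0 π) := by
  obtain ⟨hf1, h0, hπ, -⟩ := id hf
  rw [solvesProblem2_iff_sineCoeff ht₀ hc hr0 hr1 hper hmean hψ hψ0 hψπ hf1 h0 hπ] at hf
  have hcoeff : sineCoeff f = fun n => sineCoeff ψ n / duhamel ((n : ℝ) ^ 2) r0 t₀ := by
    ext n
    rcases eq_or_ne n 0 with rfl | hn
    · simp
    · rw [hf n, mul_div_cancel_right₀ _ (hne n hn)]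
  exact hcoeff ▸ (hf1.sineSeries_sineCoeff h0 hπ).symm

lemma SolvesProblem2.add_sin {m : ℕ} (hm : duhamel ((m : ℝ) ^ 2) r0 t₀ = 0)
    (hf : SolvesProblem2 T t₀ r0 r1 ψ f) :
    SolvesProblem2 T t₀ r0 r1 ψ fun x => f x + sin (m * x) := by
  obtain ⟨hf1, h0, hπ, -⟩ := id hf
  have hsin := isC1_sin_mul m
  rw [solvesProblem2_iff_sineCoeff ht₀ hc hr0 hr1 hper hmean hψ hψ0 hψπ hf1 h0 hπ] at hf
  rw [solvesProblem2_iff_sineCoeff ht₀ hc hr0 hr1 hper hmean hψ hψ0 hψπ (hf1.add hsin)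
    (by simp [h0]) (by simp [hπ, sin_nat_mul_pi])]
  intro n
  rcases eq_or_ne n 0 with rfl | hn
  · simp
  rw [sineCoeff_add hf1.intervalIntegrable hsin.intervalIntegrable, hf n, sineCoeff_sin hn]
  split_ifs with hmn
  · subst hmn
    simp [hm]
  · simp

lemma not_existsUnique_solvesProblem2 {m : ℕ} (hm0 : m ≠ 0)
    (hm : duhamel ((m : ℝ) ^ 2) r0 t₀ = 0) :
    ¬∃ f, SolvesProblem2 T t₀ r0 r1 ψ f ∧
      ∀ g, SolvesProblem2 T t₀ r0 r1 ψ g → EqOn g f (Icc 0 π) := by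
  rintro ⟨f, hf, hunique⟩
  have hm1 : (1 : ℝ) ≤ m := Nat.one_le_cast.2 (Nat.one_le_iff_ne_zero.2 hm0)
  have hpeak : (m : ℝ) * (π / 2 / m) = π / 2 := mul_div_cancel₀ _ (by positivity)
  have hmem : π / 2 / m ∈ Icc 0 π :=
    ⟨by positivity, (div_le_self (by positivity) hm1).trans (half_le_self pi_pos.le)⟩
  have heq := hunique _ (hf.add_sin ht₀ hc hr0 hr1 hper hmean hψ hψ0 hψπ hm) hmem
  simp [hpeak] at heq

end Problem2

theorem problem2_unique_iff_general
    {T t₀ c : ℝ} (ht₀ : t₀ ∈ Ioc 0 T) (hc : 0 < c) {r0 : ℝ → ℝ} {r1 : ℝ → ℝ → ℝ}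
    (hr0 : ContinuousOn r0 (Icc 0 T))
    (hr1 : ContinuousOn (fun p : ℝ × ℝ => r1 p.1 p.2) (Icc 0 T ×ˢ Ici 0))
    (hper : ∀ t ∈ Icc 0 T, ∀ τ ∈ Ici 0, r1 t (τ + c) = r1 t τ)
    (hmean : ∀ t ∈ Icc 0 T, ∫ τ in (0 : ℝ)..c, r1 t τ = 0)
    (hr0t₀ : r0 t₀ ≠ 0) {Λ : ℕ → ℝ}
    (hΛ : ∀ n : ℕ, Λ n = ∫ s in (0 : ℝ)..t₀, exp (-(n : ℝ) ^ 2 * (t₀ - s)) * r0 s)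
    {ψ ψ1 ψ2 ψ3 ψ4 : ℝ → ℝ}
    (hψ1 : ∀ x ∈ Icc 0 π, HasDerivWithinAt ψ (ψ1 x) (Icc 0 π) x)
    (hψ2 : ∀ x ∈ Icc 0 π, HasDerivWithinAt ψ1 (ψ2 x) (Icc 0 π) x)
    (hψ3 : ∀ x ∈ Icc 0 π, HasDerivWithinAt ψ2 (ψ3 x) (Icc 0 π) x)
    (hψ4 : ∀ x ∈ Icc 0 π, HasDerivWithinAt ψ3 (ψ4 x) (Icc 0 π) x)
    (hψ4L2 : MemLp ψ4 2 (volume.restrict (Ioc 0 π)))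
    (hψ0 : ψ 0 = 0) (hψπ : ψ π = 0) (hψ0'' : ψ2 0 = 0) (hψπ'' : ψ2 π = 0) {ψc : ℕ → ℝ}
    (hψc : ∀ n : ℕ, ψc n = (2 / π) * ∫ s in (0 : ℝ)..π, ψ s * sin ((n : ℝ) * s)) :
    ((∀ n : ℕ, Λ (n + 1) ≠ 0) →
      (∀ x ∈ Icc 0 π,
        Summable fun n : ℕ => ψc (n + 1) / Λ (n + 1) * sin (((n : ℝ) + 1) * x)) ∧
      SolvesProblem2 T t₀ r0 r1 ψ
        (fun x => ∑' n : ℕ, ψc (n + 1) / Λ (n + 1) * sin (((n : ℝ) + 1) * x)) ∧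
      (∀ g : ℝ → ℝ, SolvesProblem2 T t₀ r0 r1 ψ g →
        EqOn g (fun x => ∑' n : ℕ, ψc (n + 1) / Λ (n + 1) * sin (((n : ℝ) + 1) * x))
          (Icc 0 π))) ∧
    ((∃ n : ℕ, Λ (n + 1) = 0) →
      ¬ ∃ f : ℝ → ℝ, SolvesProblem2 T t₀ r0 r1 ψ f ∧
        ∀ g : ℝ → ℝ, SolvesProblem2 T t₀ r0 r1 ψ g → EqOn g f (Icc 0 π)) := by
  obtain rfl : Λ = fun n : ℕ => duhamel ((n : ℝ) ^ 2) r0 t₀ := funext hΛ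
  obtain rfl : ψc = sineCoeff ψ := funext hψc
  have hψ : IsC1 ψ := ⟨ψ1, fun x hx => (hψ2 x hx).continuousWithinAt, hψ1⟩
  have hsub : Icc 0 t₀ ⊆ Icc 0 T := Icc_subset_Icc_right ht₀.2
  have hs := summable_natCast_mul_div_duhamel ht₀.1
    ((hr0.mono hsub).integrableOn_Icc.mono_set Ioc_subset_Icc_self)
    ((hr0 t₀ (Ioc_subset_Icc_self ht₀)).mono (Ioc_subset_Icc_self.trans hsub)) hr0t₀
    (summable_abs_pow_three_mul_sineCoeff hψ1 hψ2 hψ3 hψ4 hψ4L2 hψ0 hψπ hψ0'' hψπ'')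
  have hseries (x : ℝ) := sineSeries_eq_tsum_succ
    (fun n : ℕ => sineCoeff ψ n / duhamel ((n : ℝ) ^ 2) r0 t₀) x
  refine ⟨fun hΛ0 => ?_, fun ⟨m, hm⟩ => ?_⟩
  · have hne (n : ℕ) (hn : n ≠ 0) : duhamel ((n : ℝ) ^ 2) r0 t₀ ≠ 0 :=
      Nat.succ_pred_eq_of_ne_zero hn ▸ hΛ0 n.pred
    simp only [← hseries]
    exact ⟨fun x _ => summable_mul_sin_succ (summable_abs_of_summable_abs_natCast_mul hs) x,
      solvesProblem2_sineSeries ht₀ hc hr0 hr1 hper hmean hψ hψ0 hψπ hne hs,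
      fun g hg => hg.eqOn_sineSeries ht₀ hc hr0 hr1 hper hmean hψ hψ0 hψπ hne⟩
  · exact not_existsUnique_solvesProblem2 ht₀ hc hr0 hr1 hper hmean hψ hψ0 hψπ m.succ_ne_zero hm

/-- **Theorem 4, part 1.** If `Λ_n ≠ 0` for all `n ≥ 1` then Problem 2 has exactly one
solution, namely `f(x) = Σ (ψ_n/Λ_n) sin nx`, which is `C¹` and vanishes at `0, π`;
conversely, if some `Λ_n = 0` then Problem 2 does not have a unique solution. -/
theorem problem2_unique_iff
    (T : ℝ) (hT : 0 < T)
    -- `r₀` continuous, `r₁` of class `C^{α,0}`, 2π-periodic in `τ` with zero mean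
    (r0 : ℝ → ℝ) (r1 : ℝ → ℝ → ℝ)
    (hr0 : ContinuousOn r0 (Icc 0 T))
    (hper : ∀ t ∈ Icc (0:ℝ) T, ∀ τ ∈ Ici (0:ℝ), r1 t (τ + 2 * π) = r1 t τ)
    (hzero : ∀ t ∈ Icc (0:ℝ) T, (∫ τ in (0:ℝ)..(2 * π), r1 t τ) = 0)
    (α : ℝ) (hα : α ∈ Ioo (0:ℝ) 1) (C : ℝ)
    (hr1c : ContinuousOn (fun p : ℝ × ℝ => r1 p.1 p.2) (Icc 0 T ×ˢ Ici 0))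
    (hr1hold : ∀ τ ∈ Ici (0:ℝ), ∀ t ∈ Icc (0:ℝ) T, ∀ t' ∈ Icc (0:ℝ) T,
      |r1 t τ - r1 t' τ| ≤ C * |t - t'| ^ α)
    -- the point `t₀` and the numbers `Λ_n`
    (t₀ : ℝ) (ht₀ : t₀ ∈ Ioc 0 T) (hr0t₀ : r0 t₀ ≠ 0)
    (Λ : ℕ → ℝ)
    (hΛ : ∀ n : ℕ, Λ n = ∫ s in (0:ℝ)..t₀, exp (-(n:ℝ) ^ 2 * (t₀ - s)) * r0 s)
    -- the datum `ψ ∈ C⁴([0,π])` with `ψ^{(2k)}(0) = ψ^{(2k)}(π) = 0`, `k = 0,1,2`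
    (ψ ψ1 ψ2 ψ3 ψ4 : ℝ → ℝ)
    (hψ1 : ∀ x ∈ Icc (0:ℝ) π, HasDerivWithinAt ψ (ψ1 x) (Icc 0 π) x)
    (hψ2 : ∀ x ∈ Icc (0:ℝ) π, HasDerivWithinAt ψ1 (ψ2 x) (Icc 0 π) x)
    (hψ3 : ∀ x ∈ Icc (0:ℝ) π, HasDerivWithinAt ψ2 (ψ3 x) (Icc 0 π) x)
    (hψ4 : ∀ x ∈ Icc (0:ℝ) π, HasDerivWithinAt ψ3 (ψ4 x) (Icc 0 π) x)
    (hψ4c : ContinuousOn ψ4 (Icc 0 π))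
    (hψb : ψ 0 = 0 ∧ ψ π = 0 ∧ ψ2 0 = 0 ∧ ψ2 π = 0 ∧ ψ4 0 = 0 ∧ ψ4 π = 0)
    -- Fourier sine coefficients of `ψ`
    (ψc : ℕ → ℝ)
    (hψc : ∀ n : ℕ, ψc n = (2 / π) * ∫ s in (0:ℝ)..π, ψ s * sin ((n:ℝ) * s)) :
    -- part 1: `M₀ = ∅` gives existence and uniqueness, with an explicit solution
    ((∀ n : ℕ, Λ (n + 1) ≠ 0) →
      (∀ x ∈ Icc (0:ℝ) π,
        Summable fun n : ℕ => ψc (n + 1) / Λ (n + 1) * sin (((n:ℝ) + 1) * x)) ∧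
      SolvesProblem2 T t₀ r0 r1 ψ
        (fun x => ∑' n : ℕ, ψc (n + 1) / Λ (n + 1) * sin (((n:ℝ) + 1) * x)) ∧
      (∀ g : ℝ → ℝ, SolvesProblem2 T t₀ r0 r1 ψ g →
        EqOn g (fun x => ∑' n : ℕ, ψc (n + 1) / Λ (n + 1) * sin (((n:ℝ) + 1) * x))
          (Icc 0 π))) ∧
    -- part 2 (converse): if `M₀ ≠ ∅` then Problem 2 does not have a unique solution
    ((∃ n : ℕ, Λ (n + 1) = 0) →
      ¬ ∃ f : ℝ → ℝ, SolvesProblem2 T t₀ r0 r1 ψ f ∧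
        ∀ g : ℝ → ℝ, SolvesProblem2 T t₀ r0 r1 ψ g → EqOn g f (Icc 0 π)) :=
  problem2_unique_iff_general ht₀ two_pi_pos hr0 hr1c hper hzero hr0t₀ hΛ hψ1 hψ2 hψ3 hψ4
    (memLp_two_of_continuousOn_Icc hψ4c) hψb.1 hψb.2.1 hψb.2.2.1 hψb.2.2.2.1 hψc
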